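/- arXiv:1607.08716 — 2 statements merged into one kernel-verified Lean document; each statement's English description precedes it below -/
import Mathlib

section
/- For α > 0 and y > 0 let g_α(y) = θ₃(αy)·θ₃(α/y) + θ₂(αy)·θ₂(α/y). Then: (1) g_α is strictly decreasing on (1, √3) and strictly increasing on (√3, +∞); (2) the second derivative of g_α at y = 1 is negative, g_α''(1) < 0. In particular y = √3 is the unique minimizer of g_α on [1, +∞). -/
/-!
Write `β = πα`. Expanding the products, `g_α(y)` is the sum of `e^{-β(m²y + n²/y)}` over
`(m, n) ∈ ℤ² ∪ (ℤ + 1/2)²`, the theta function of a centred rectangular lattice, which is square at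
`y = 1` and hexagonal at `y = √3`. The points are indexed by `(a, b) ∈ ℤ²` through
`m = (a + b)/2`, `n = (a - b)/2`.

* Poisson summation gives `g_α = (2/α) g_{4/α}` (`energy_dual`), so `α ≥ 2`, hence `β ≥ 6.28`, may be
  assumed. All estimates are then dominated by a few lattice points.
* The rotational symmetry of the hexagonal lattice gives `g_α'(√3) = 0` (`energyDer_sqrt_three`).
* For `y ≥ √3` the quantity `y² g_α'(y)/β = ∑ (n² - m²y²) e^{-β(m²y + n²/y)}` is strictly
  increasing. The terms `(0, ±1)` grow by `Δ = e^{-β/y₂} - e^{-β/y₁}` when `y` goes from `y₁` to `y₂`,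
  while every other term decreases by at most a constant multiple of `Δ`, and these constants sum to
  less than `2` (`outerBound_le`, `hasSum_outerBound`). Hence `g_α' > 0` on `(√3, ∞)`.
* For `1 < y < √3` put `y = e^s` and average the series over `b ↦ -b`. With `k = (a² + b²)/2`,
  `D = ab`, `u = sinh s` and `C = cosh s`, dividing by `u e^{-βC/2}` leaves the terms
  `e^{-β(k - 1/2)C} (D C sinh(βDu)/u - k cosh(βDu))` (`innerTerm`). The four terms with
  `|a| = |b| = 1` grow on `(0, log √3]`, where `2u ≤ C`, and the other terms decrease by at most
  small multiples of that growth (`innerBound_le`, `hasSum_innerBound`). The sum `innerSum` is thus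
  strictly increasing and vanishes at `log √3`, so it is negative before, and `g_α' < 0` on
  `(1, √3)`.
* As `innerSum` increases, it stays below a negative constant near `s = 0`. Since `g_α'` is
  `innerSum` times a factor comparable to `y - 1`, the difference quotients of `g_α'` at `1` stay
  below a negative constant, which gives `g_α''(1) < 0`.
-/

open scoped BigOperators

/-- The classical Jacobi theta function `θ₂(x) = Σ_{k∈ℤ} e^{−π(k+1/2)²x}`. -/
noncomputable def theta2 (x : ℝ) : ℝ :=
  ∑' n : ℤ, Real.exp (-Real.pi * ((n : ℝ) + 1 / 2) ^ 2 * x)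

/-- The classical Jacobi theta function `θ₃(x) = Σ_{k∈ℤ} e^{−πk²x}`. -/
noncomputable def theta3 (x : ℝ) : ℝ :=
  ∑' n : ℤ, Real.exp (-Real.pi * (n : ℝ) ^ 2 * x)

/-! ### Theta series and their derivatives -/

/-- The `j`-th derivative in `x` of `∑ e^{-π(n+δ)²x}`, differentiated termwise. The shift `δ = 0`
gives `theta3`, the shift `δ = 1/2` gives `theta2`. -/
noncomputable def thetaDer (δ : ℝ) (j : ℕ) (x : ℝ) : ℝ :=
  ∑' n : ℤ, (-Real.pi * ((n : ℝ) + δ) ^ 2) ^ j * Real.exp (-Real.pi * ((n : ℝ) + δ) ^ 2 * x)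

lemma theta3_eq (x : ℝ) : theta3 x = thetaDer 0 0 x := by
  simp [theta3, thetaDer]

lemma theta2_eq (x : ℝ) : theta2 x = thetaDer (1 / 2) 0 x := by
  simp [theta2, thetaDer]

lemma summable_abs_thetaDer (δ : ℝ) (j : ℕ) {x : ℝ} (hx : 0 < x) :
    Summable fun n : ℤ => ‖(-Real.pi * ((n : ℝ) + δ) ^ 2) ^ j *
      Real.exp (-Real.pi * ((n : ℝ) + δ) ^ 2 * x)‖ := by
  have h := (HurwitzKernelBounds.summable_f_int (2 * j) δ hx).mul_left (Real.pi ^ j)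
  refine h.congr fun n => ?_
  simp only [HurwitzKernelBounds.f_int, norm_mul, norm_pow, norm_neg, Real.norm_eq_abs,
    abs_of_pos Real.pi_pos, Real.abs_exp]
  rw [mul_pow, pow_mul]
  ring

lemma hasSum_thetaDer (δ : ℝ) (j : ℕ) {x : ℝ} (hx : 0 < x) :
    HasSum (fun n : ℤ => (-Real.pi * ((n : ℝ) + δ) ^ 2) ^ j *
      Real.exp (-Real.pi * ((n : ℝ) + δ) ^ 2 * x)) (thetaDer δ j x) :=
  (summable_abs_thetaDer δ j hx).of_norm.hasSum

lemma hasDerivAt_thetaDer (δ : ℝ) (j : ℕ) {x : ℝ} (hx : 0 < x) :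
    HasDerivAt (thetaDer δ j) (thetaDer δ (j + 1) x) x := by
  have hx2 : 0 < x / 2 := by linarith
  have hd : ∀ (n : ℤ) (y : ℝ), y ∈ Set.Ioi (x / 2) → HasDerivAt
      (fun y => (-Real.pi * ((n : ℝ) + δ) ^ 2) ^ j * Real.exp (-Real.pi * ((n : ℝ) + δ) ^ 2 * y))
      ((-Real.pi * ((n : ℝ) + δ) ^ 2) ^ (j + 1) *
        Real.exp (-Real.pi * ((n : ℝ) + δ) ^ 2 * y)) y := by
    intro n y _
    generalize -Real.pi * ((n : ℝ) + δ) ^ 2 = c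
    have h1 : HasDerivAt (fun y : ℝ => c * y) c y := by
      simpa using (hasDerivAt_id y).const_mul c
    refine (h1.exp.const_mul (c ^ j)).congr_deriv ?_
    ring
  have hb : ∀ (n : ℤ) (y : ℝ), y ∈ Set.Ioi (x / 2) →
      ‖(-Real.pi * ((n : ℝ) + δ) ^ 2) ^ (j + 1) *
        Real.exp (-Real.pi * ((n : ℝ) + δ) ^ 2 * y)‖ ≤
      ‖(-Real.pi * ((n : ℝ) + δ) ^ 2) ^ (j + 1) *
        Real.exp (-Real.pi * ((n : ℝ) + δ) ^ 2 * (x / 2))‖ := by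
    intro n y hy
    rw [norm_mul, norm_mul, Real.norm_eq_abs (Real.exp _), Real.norm_eq_abs (Real.exp _),
      Real.abs_exp, Real.abs_exp]
    refine mul_le_mul_of_nonneg_left (Real.exp_le_exp.2 ?_) (norm_nonneg _)
    have h1 : 0 ≤ Real.pi * ((n : ℝ) + δ) ^ 2 := by positivity
    have h2 : x / 2 < y := hy
    nlinarith
  have hm : x ∈ Set.Ioi (x / 2) := by
    rw [Set.mem_Ioi]
    linarith
  exact hasDerivAt_tsum_of_isPreconnected (summable_abs_thetaDer δ (j + 1) hx2) isOpen_Ioi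
    isPreconnected_Ioi hd hb hm (summable_abs_thetaDer δ j hx).of_norm hm

/-! ### The functional equation -/

lemma HasSum.of_two_injections {ι κ : Type*} {e₁ e₂ : κ → ι} (h₁ : Function.Injective e₁)
    (h₂ : Function.Injective e₂) (hc : IsCompl (Set.range e₁) (Set.range e₂)) {f : ι → ℝ}
    {A B : ℝ} (hA : HasSum (fun k => f (e₁ k)) A) (hB : HasSum (fun k => f (e₂ k)) B) :
    HasSum f (A + B) :=
  (h₁.hasSum_range_iff.2 hA).add_isCompl hc (h₂.hasSum_range_iff.2 hB)

lemma isCompl_int_even_odd :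
    IsCompl (Set.range fun n : ℤ => 2 * n) (Set.range fun n : ℤ => 2 * n + 1) := by
  constructor
  · rw [Set.disjoint_left]
    rintro _ ⟨a, rfl⟩ ⟨b, hb⟩
    simp only at hb
    omega
  · rw [codisjoint_iff_le_sup]
    intro x _
    rcases Int.even_or_odd' x with ⟨c, h | h⟩
    · exact Or.inl ⟨c, h.symm⟩
    · exact Or.inr ⟨c, h.symm⟩

lemma theta3_split {x : ℝ} (hx : 0 < x) : theta3 x = theta3 (4 * x) + theta2 (4 * x) := by
  have h4 : 0 < 4 * x := by linarith
  have h3 := hasSum_thetaDer 0 0 h4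
  have h2 := hasSum_thetaDer (1 / 2) 0 h4
  have h := hasSum_thetaDer 0 0 hx
  rw [theta3_eq, theta3_eq, theta2_eq]
  refine h.unique (HasSum.of_two_injections (e₁ := fun n : ℤ => 2 * n)
    (e₂ := fun n : ℤ => 2 * n + 1) (fun a b h => by simp only at h; omega)
    (fun a b h => by simp only at h; omega) isCompl_int_even_odd ?_ ?_)
  · convert h3 using 3 with n
    · simp
    · push_cast; ring_nf
  · convert h2 using 3 with n
    · simp
    · push_cast; ring_nf

lemma theta3_inv {x : ℝ} (hx : 0 < x) : theta3 x = 1 / Real.sqrt x * theta3 (1 / x) := by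
  have h := Real.tsum_exp_neg_mul_int_sq hx
  rw [← Real.sqrt_eq_rpow] at h
  rw [theta3, theta3]
  convert h using 4 with n n
  · ring_nf
  · ring_nf

lemma theta3_dual {x : ℝ} (hx : 0 < x) :
    theta3 x = 1 / Real.sqrt x * (theta3 (4 / x) + theta2 (4 / x)) := by
  have h := theta3_split (x := 1 / x) (by positivity)
  rw [mul_one_div] at h
  rw [← h]
  exact theta3_inv hx

lemma theta2_dual {x : ℝ} (hx : 0 < x) :
    theta2 x = 1 / Real.sqrt x * (theta3 (4 / x) - theta2 (4 / x)) := by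
  have h1 := theta3_split (x := x / 4) (by positivity)
  rw [mul_div_cancel₀ _ (by norm_num : (4 : ℝ) ≠ 0)] at h1
  have h2 := theta3_inv (x := x / 4) (by positivity)
  have h3 := theta3_dual hx
  have h4 : Real.sqrt (x / 4) = Real.sqrt x / 2 := by
    rw [Real.sqrt_div hx.le, show (4 : ℝ) = 2 ^ 2 by norm_num, Real.sqrt_sq (by norm_num)]
  have h5 : 1 / (x / 4) = 4 / x := by field_simp
  rw [h4, h5] at h2
  have h6 : theta2 x = theta3 (x / 4) - theta3 x := by linarith
  rw [h6, h2, h3]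
  have : Real.sqrt x ≠ 0 := (Real.sqrt_pos.2 hx).ne'
  field_simp
  ring

/-- The energy `g_α(y)` of the statement. -/
noncomputable def energy (α y : ℝ) : ℝ :=
  theta3 (α * y) * theta3 (α / y) + theta2 (α * y) * theta2 (α / y)

/-- Poisson summation: the lattice underlying `g_α` is, up to scaling by `2`, its own dual. -/
lemma energy_dual {α y : ℝ} (hα : 0 < α) (hy : 0 < y) :
    energy α y = 2 / α * energy (4 / α) y := by
  have h1 : 0 < α * y := by positivity
  have h2 : 0 < α / y := by positivity
  rw [energy, theta3_dual h1, theta3_dual h2, theta2_dual h1, theta2_dual h2, energy]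
  have e1 : 4 / (α * y) = 4 / α / y := by field_simp
  have e2 : 4 / (α / y) = 4 / α * y := by field_simp
  have e3 : Real.sqrt (α * y) * Real.sqrt (α / y) = α := by
    rw [← Real.sqrt_mul h1.le, show α * y * (α / y) = α ^ 2 by field_simp, Real.sqrt_sq hα.le]
  rw [e1, e2, one_div, one_div]
  have e4 : (Real.sqrt (α * y))⁻¹ * (Real.sqrt (α / y))⁻¹ = 1 / α := by
    rw [← mul_inv, e3, one_div]
  generalize (Real.sqrt (α * y))⁻¹ = A at *
  generalize (Real.sqrt (α / y))⁻¹ = B at *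
  linear_combination (2 * (theta3 (4 / α / y) * theta3 (4 / α * y) +
    theta2 (4 / α / y) * theta2 (4 / α * y))) * e4

/-! ### The derivative as a lattice sum -/

/-- The index `(a, b)` stands for the lattice point `(m, n) = ((a + b) / 2, (a - b) / 2)`, which
runs through `ℤ² ∪ (ℤ + 1/2)²`. -/
lemma hasSum_lattice {h : ℝ → ℝ → ℝ} {A B : ℝ}
    (hA : HasSum (fun p : ℤ × ℤ => h p.1 p.2) A)
    (hB : HasSum (fun p : ℤ × ℤ => h (p.1 + 1 / 2) (p.2 + 1 / 2)) B) :
    HasSum (fun p : ℤ × ℤ => h (((p.1 : ℝ) + p.2) / 2) (((p.1 : ℝ) - p.2) / 2)) (A + B) := by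
  refine HasSum.of_two_injections (e₁ := fun p : ℤ × ℤ => (p.1 + p.2, p.1 - p.2))
    (e₂ := fun p : ℤ × ℤ => (p.1 + p.2 + 1, p.1 - p.2)) ?_ ?_ ?_ ?_ ?_
  · rintro ⟨a, b⟩ ⟨c, d⟩ h
    simp only [Prod.mk.injEq] at h ⊢
    omega
  · rintro ⟨a, b⟩ ⟨c, d⟩ h
    simp only [Prod.mk.injEq] at h ⊢
    omega
  · constructor
    · rw [Set.disjoint_left]
      rintro _ ⟨⟨a, b⟩, rfl⟩ ⟨⟨c, d⟩, h⟩
      simp only [Prod.mk.injEq] at h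
      omega
    · rw [codisjoint_iff_le_sup]
      rintro ⟨a, b⟩ _
      rcases Int.even_or_odd' (a + b) with ⟨c, h | h⟩
      · refine Or.inl ⟨(c, a - c), ?_⟩
        simp only [Prod.mk.injEq]
        omega
      · refine Or.inr ⟨(c, a - c - 1), ?_⟩
        simp only [Prod.mk.injEq]
        omega
  · convert hA using 3 with p
    · push_cast; ring_nf
    · push_cast; ring_nf
  · convert hB using 3 with p
    · push_cast; ring_nf
    · push_cast; ring_nf

/-- The derivative of `g_α`. -/
noncomputable def energyDer (α y : ℝ) : ℝ :=
  (thetaDer 0 1 (α * y) * α * thetaDer 0 0 (α / y) +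
    thetaDer 0 0 (α * y) * (thetaDer 0 1 (α / y) * (-α / y ^ 2))) +
  (thetaDer (1 / 2) 1 (α * y) * α * thetaDer (1 / 2) 0 (α / y) +
    thetaDer (1 / 2) 0 (α * y) * (thetaDer (1 / 2) 1 (α / y) * (-α / y ^ 2)))

lemma hasDerivAt_thetaDer_mul (δ : ℝ) (j : ℕ) {α y : ℝ} (hα : 0 < α) (hy : 0 < y) :
    HasDerivAt (fun z => thetaDer δ j (α * z)) (thetaDer δ (j + 1) (α * y) * α) y := by
  have h := hasDerivAt_thetaDer δ j (x := α * y) (by positivity)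
  have h2 : HasDerivAt (fun z : ℝ => α * z) α y := by
    simpa using (hasDerivAt_id y).const_mul α
  exact h.comp y h2

lemma hasDerivAt_thetaDer_div (δ : ℝ) (j : ℕ) {α y : ℝ} (hα : 0 < α) (hy : 0 < y) :
    HasDerivAt (fun z => thetaDer δ j (α / z))
      (thetaDer δ (j + 1) (α / y) * (-α / y ^ 2)) y := by
  have h := hasDerivAt_thetaDer δ j (x := α / y) (by positivity)
  have h2 : HasDerivAt (fun z : ℝ => α / z) (-α / y ^ 2) y := by
    convert! (hasDerivAt_const y α).div (hasDerivAt_id y) hy.ne' using 1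
    simp
  exact h.comp y h2

lemma hasDerivAt_energy {α y : ℝ} (hα : 0 < α) (hy : 0 < y) :
    HasDerivAt (energy α) (energyDer α y) y := by
  have e : energy α = fun z => thetaDer 0 0 (α * z) * thetaDer 0 0 (α / z) +
      thetaDer (1 / 2) 0 (α * z) * thetaDer (1 / 2) 0 (α / z) := by
    funext z
    rw [energy, theta3_eq, theta3_eq, theta2_eq, theta2_eq]
  rw [e]
  exact ((hasDerivAt_thetaDer_mul 0 0 hα hy).mul (hasDerivAt_thetaDer_div 0 0 hα hy)).add
    ((hasDerivAt_thetaDer_mul (1 / 2) 0 hα hy).mul (hasDerivAt_thetaDer_div (1 / 2) 0 hα hy))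

lemma differentiableAt_energyDer {α y : ℝ} (hα : 0 < α) (hy : 0 < y) :
    DifferentiableAt ℝ (energyDer α) y := by
  have h1 := fun δ j => (hasDerivAt_thetaDer_mul δ j hα hy).differentiableAt
  have h2 := fun δ j => (hasDerivAt_thetaDer_div δ j hα hy).differentiableAt
  have h3 : DifferentiableAt ℝ (fun z : ℝ => -α / z ^ 2) y := by
    refine (differentiableAt_const _).div (by fun_prop) (by positivity)
  unfold energyDer
  exact ((((h1 0 1).mul_const α).mul (h2 0 0)).add ((h1 0 0).mul ((h2 0 1).mul h3))).add
    ((((h1 (1 / 2) 1).mul_const α).mul (h2 (1 / 2) 0)).add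
      ((h1 (1 / 2) 0).mul ((h2 (1 / 2) 1).mul h3)))

lemma hasSum_energyDer_shift (δ : ℝ) {α y : ℝ} (hα : 0 < α) (hy : 0 < y) :
    HasSum (fun p : ℤ × ℤ => Real.pi * α * (((p.2 : ℝ) + δ) ^ 2 - ((p.1 : ℝ) + δ) ^ 2 * y ^ 2) *
        Real.exp (-(Real.pi * α) * (((p.1 : ℝ) + δ) ^ 2 * y + ((p.2 : ℝ) + δ) ^ 2 / y)))
      (y ^ 2 * (thetaDer δ 1 (α * y) * α * thetaDer δ 0 (α / y) +
        thetaDer δ 0 (α * y) * (thetaDer δ 1 (α / y) * (-α / y ^ 2)))) := by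
  have hx1 : 0 < α * y := by positivity
  have hx2 : 0 < α / y := by positivity
  have key : ∀ i j : ℕ, HasSum (fun p : ℤ × ℤ =>
      ((-Real.pi * ((p.1 : ℝ) + δ) ^ 2) ^ i * Real.exp (-Real.pi * ((p.1 : ℝ) + δ) ^ 2 * (α * y))) *
      ((-Real.pi * ((p.2 : ℝ) + δ) ^ 2) ^ j * Real.exp (-Real.pi * ((p.2 : ℝ) + δ) ^ 2 * (α / y))))
      (thetaDer δ i (α * y) * thetaDer δ j (α / y)) := fun i j =>
    (hasSum_thetaDer δ i hx1).mul (hasSum_thetaDer δ j hx2)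
      (summable_mul_of_summable_norm (summable_abs_thetaDer δ i hx1)
        (summable_abs_thetaDer δ j hx2))
  have h := ((key 1 0).mul_left (y ^ 2 * α)).add ((key 0 1).mul_left (-α))
  convert! h using 1
  · funext p
    have e : Real.exp (-(Real.pi * α) * (((p.1 : ℝ) + δ) ^ 2 * y + ((p.2 : ℝ) + δ) ^ 2 / y)) =
        Real.exp (-Real.pi * ((p.1 : ℝ) + δ) ^ 2 * (α * y)) *
        Real.exp (-Real.pi * ((p.2 : ℝ) + δ) ^ 2 * (α / y)) := by
      rw [← Real.exp_add]
      congr 1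
      ring
    rw [e]
    ring
  · field_simp

/-- One summand of `y² g_α'(y) / β`, with `β = π α`. -/
noncomputable def slopeTerm (β y m n : ℝ) : ℝ :=
  (n ^ 2 - m ^ 2 * y ^ 2) * Real.exp (-β * (m ^ 2 * y + n ^ 2 / y))

lemma hasSum_energyDer {α y : ℝ} (hα : 0 < α) (hy : 0 < y) :
    HasSum (fun p : ℤ × ℤ =>
        slopeTerm (Real.pi * α) y (((p.1 : ℝ) + p.2) / 2) (((p.1 : ℝ) - p.2) / 2))
      (y ^ 2 * energyDer α y / (Real.pi * α)) := by
  have h0 := hasSum_energyDer_shift 0 hα hy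
  have h1 := hasSum_energyDer_shift (1 / 2) hα hy
  simp only [add_zero] at h0
  have h := (hasSum_lattice (h := fun m n => Real.pi * α * (n ^ 2 - m ^ 2 * y ^ 2) *
        Real.exp (-(Real.pi * α) * (m ^ 2 * y + n ^ 2 / y))) h0 h1).div_const (Real.pi * α)
  have hβ : Real.pi * α ≠ 0 := by positivity
  convert! h using 1
  · funext p
    rw [slopeTerm]
    field_simp
  · rw [energyDer, mul_add]

/-! ### Comparison of lattice sums -/

/-- If every term grows by at least `l i` times a common positive amount and `∑ l > 0`, then the
sum grows. -/
lemma lt_of_hasSum_of_increments {ι : Type*} {f₁ f₂ l : ι → ℝ} {A B L Δ : ℝ}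
    (h₁ : HasSum f₁ A) (h₂ : HasSum f₂ B) (hl : HasSum l L) (hL : 0 < L) (hΔ : 0 < Δ)
    (h : ∀ i, l i * Δ ≤ f₂ i - f₁ i) : A < B := by
  have h3 := hasSum_le h (hl.mul_right Δ) (h₂.sub h₁)
  have h4 : 0 < L * Δ := by positivity
  linarith

/-- A summable weight on `ℤ²` which dominates all but finitely many error terms. -/
noncomputable def latWeight (p : ℤ × ℤ) : ℝ :=
  (1 / 2 : ℝ) ^ p.1.natAbs * (1 / 2 : ℝ) ^ p.2.natAbs

lemma latWeight_pos (p : ℤ × ℤ) : 0 < latWeight p := by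
  unfold latWeight
  positivity

lemma hasSum_half_pow_natAbs : HasSum (fun n : ℤ => (1 / 2 : ℝ) ^ n.natAbs) 3 := by
  have h1 : HasSum (fun n : ℕ => (1 / 2 : ℝ) ^ (n : ℤ).natAbs) 2 := by
    simp only [Int.natAbs_natCast]
    exact hasSum_geometric_two
  have h2 : HasSum (fun n : ℕ => (1 / 2 : ℝ) ^ (-((n : ℤ) + 1)).natAbs) 1 := by
    have h := hasSum_geometric_two.mul_right (1 / 2 : ℝ)
    have e : (fun n : ℕ => (1 / 2 : ℝ) ^ (-((n : ℤ) + 1)).natAbs) =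
        fun n => (1 / 2 : ℝ) ^ n * (1 / 2) := by
      funext n
      rw [show (-((n : ℤ) + 1)).natAbs = n + 1 by omega, pow_succ]
    rw [e]
    rwa [show (2 : ℝ) * (1 / 2) = 1 by norm_num] at h
  have h := HasSum.of_nat_of_neg_add_one (f := fun n : ℤ => (1 / 2 : ℝ) ^ n.natAbs) h1 h2
  rwa [show (2 : ℝ) + 1 = 3 by norm_num] at h

lemma hasSum_latWeight : HasSum latWeight 9 := by
  have h := hasSum_half_pow_natAbs.mul hasSum_half_pow_natAbs
    (hasSum_half_pow_natAbs.summable.mul_of_nonneg hasSum_half_pow_natAbs.summable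
      (fun n => by positivity) (fun n => by positivity))
  rw [show (3 : ℝ) * 3 = 9 by norm_num] at h
  exact h

lemma hasSum_finset_indicator (F : Finset (ℤ × ℤ)) (c : ℝ) :
    HasSum (fun p => if p ∈ F then c else 0) (F.card * c) := by
  have h : HasSum (fun p => if p ∈ F then c else 0) (∑ p ∈ F, if p ∈ F then c else 0) :=
    hasSum_sum_of_ne_finset_zero (fun p hp => by simp [hp])
  simpa [Finset.sum_ite_mem] using h

/-! ### The hexagonal lattice is critical -/

/-- At `y = √3` the lattice is hexagonal. In index coordinates the rotation by `π / 3` is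
`(a, b) ↦ (-b, a + b)`; it preserves the exponents, and the quadratic prefactors of an index and its
next two images add up to zero. -/
lemma energyDer_sqrt_three {α : ℝ} (hα : 0 < α) : energyDer α (Real.sqrt 3) = 0 := by
  have h3 : 0 < Real.sqrt 3 := by positivity
  have hsq : Real.sqrt 3 ^ 2 = 3 := Real.sq_sqrt (by norm_num)
  have h := hasSum_energyDer hα h3
  set A := Real.sqrt 3 ^ 2 * energyDer α (Real.sqrt 3) / (Real.pi * α) with hA
  let E : ℝ → ℝ → ℝ := fun a b =>
    Real.exp (-(Real.pi * α) * ((a ^ 2 + a * b + b ^ 2) / Real.sqrt 3))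
  have h' : HasSum (fun p : ℤ × ℤ =>
      -((p.1 : ℝ) ^ 2 + (p.2 : ℝ) ^ 2 + 4 * p.1 * p.2) / 2 * E p.1 p.2) A := by
    convert! h using 1
    funext p
    simp only [slopeTerm, E]
    rw [hsq]
    congr 2
    · ring
    · congr 1
      field_simp
      rw [hsq]
      ring
  let e : ℤ × ℤ ≃ ℤ × ℤ :=
    { toFun := fun p => (-p.2, p.1 + p.2)
      invFun := fun p => (p.1 + p.2, -p.1)
      left_inv := fun p => by ext <;> simp
      right_inv := fun p => by ext <;> simp }
  have h1 := e.hasSum_iff.2 h'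
  have h2 := e.hasSum_iff.2 h1
  have hs := (h'.add h1).add h2
  have hz : ∀ p : ℤ × ℤ, E (-p.2) (p.1 + p.2) = E p.1 p.2 ∧
      E (-(p.1 + p.2)) (-p.2 + (p.1 + p.2)) = E p.1 p.2 := by
    intro p
    simp only [E]
    constructor <;> ring_nf
  have h0 : HasSum (fun _ : ℤ × ℤ => (0 : ℝ)) (A + A + A) := by
    convert! hs using 1
    funext p
    simp only [Function.comp_apply, e, Equiv.coe_fn_mk]
    push_cast
    rw [(hz p).1, (hz p).2]
    ring
  have h4 : A + A + A = 0 := h0.unique hasSum_zero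
  have h5 : A = 0 := by linarith
  rw [hA, hsq] at h5
  have hβ : Real.pi * α ≠ 0 := by positivity
  field_simp at h5
  rw [mul_zero] at h5
  linarith

/-! ### Beyond the hexagonal point -/

lemma hasDerivAt_slopeTerm (β m n : ℝ) {y : ℝ} (hy : 0 < y) :
    HasDerivAt (fun z => slopeTerm β z m n)
      ((β * (n ^ 2 - m ^ 2 * y ^ 2) ^ 2 / y ^ 2 - 2 * m ^ 2 * y) *
        Real.exp (-β * (m ^ 2 * y + n ^ 2 / y))) y := by
  have h1 : HasDerivAt (fun z : ℝ => n ^ 2 - m ^ 2 * z ^ 2) (-(m ^ 2 * (2 * y))) y := by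
    have h := ((hasDerivAt_pow 2 y).const_mul (m ^ 2)).const_sub (n ^ 2)
    simpa using h
  have h2 : HasDerivAt (fun z : ℝ => n ^ 2 / z) (-n ^ 2 / y ^ 2) y := by
    convert! (hasDerivAt_const y (n ^ 2)).div (hasDerivAt_id y) hy.ne' using 1
    simp
  have h3 : HasDerivAt (fun z : ℝ => m ^ 2 * z) (m ^ 2) y := by
    simpa using (hasDerivAt_id y).const_mul (m ^ 2)
  have h4 := h1.mul ((h3.add h2).const_mul (-β)).exp
  refine h4.congr_deriv ?_
  simp only [Pi.add_apply]
  field_simp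
  ring

/-- The term `(m, n)` decreases by at most `c` times the growth of the term `(0, 1)`. In the
derivative only `-2m²y` is negative, and `hc` bounds its contribution. -/
lemma slopeTerm_increment {β m n c : ℝ} (hβ : 0 < β)
    (hc : ∀ y : ℝ, 0 < y → 3 ≤ y ^ 2 →
      2 * m ^ 2 * y ^ 3 * Real.exp (-β * (m ^ 2 * y + (n ^ 2 - 1) / y)) ≤ c * β)
    {y₁ y₂ : ℝ} (h₁ : Real.sqrt 3 ≤ y₁) (h₁₂ : y₁ ≤ y₂) :
    -c * (slopeTerm β y₂ 0 1 - slopeTerm β y₁ 0 1) ≤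
      slopeTerm β y₂ m n - slopeTerm β y₁ m n := by
  have h3 : 0 < Real.sqrt 3 := by positivity
  have hd : ∀ y : ℝ, 0 < y →
      HasDerivAt (fun z => slopeTerm β z m n + c * slopeTerm β z 0 1) _ y := fun y hy =>
    (hasDerivAt_slopeTerm β m n hy).add ((hasDerivAt_slopeTerm β 0 1 hy).const_mul c)
  have hmono : MonotoneOn (fun z => slopeTerm β z m n + c * slopeTerm β z 0 1)
      (Set.Ici (Real.sqrt 3)) := by
    refine monotoneOn_of_deriv_nonneg (convex_Ici _) ?_ ?_ ?_
    · intro y hy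
      exact (hd y (h3.trans_le hy)).continuousAt.continuousWithinAt
    · intro y hy
      rw [interior_Ici] at hy
      exact (hd y (h3.trans hy)).differentiableAt.differentiableWithinAt
    · intro y hy
      rw [interior_Ici] at hy
      have hy0 : 0 < y := h3.trans hy
      have hy3 : 3 ≤ y ^ 2 := by
        have := Real.sq_sqrt (show (0 : ℝ) ≤ 3 by norm_num)
        have h5 : Real.sqrt 3 < y := hy
        nlinarith
      rw [(hd y hy0).deriv]
      have hcy := hc y hy0 hy3
      have e1 : Real.exp (-β * (m ^ 2 * y + n ^ 2 / y)) =
          Real.exp (-β * (m ^ 2 * y + (n ^ 2 - 1) / y)) * Real.exp (-β * (1 / y)) := by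
        rw [← Real.exp_add]
        congr 1
        field_simp
        ring
      have e2 : -β * (0 ^ 2 * y + 1 ^ 2 / y) = -β * (1 / y) := by ring
      rw [e2, e1]
      set P := Real.exp (-β * (m ^ 2 * y + (n ^ 2 - 1) / y)) with hP
      set Q := Real.exp (-β * (1 / y)) with hQ
      have hP0 : 0 < P := Real.exp_pos _
      have hQ0 : 0 < Q := Real.exp_pos _
      have e3 : (β * (n ^ 2 - m ^ 2 * y ^ 2) ^ 2 / y ^ 2 - 2 * m ^ 2 * y) * (P * Q) +
          c * ((β * (1 ^ 2 - 0 ^ 2 * y ^ 2) ^ 2 / y ^ 2 - 2 * 0 ^ 2 * y) * Q) =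
          (β * (n ^ 2 - m ^ 2 * y ^ 2) ^ 2 * P +
            (c * β - 2 * m ^ 2 * y ^ 3 * P)) * Q / y ^ 2 := by
        field_simp
        ring
      rw [e3]
      have : 0 ≤ c * β - 2 * m ^ 2 * y ^ 3 * P := by linarith
      positivity
  have h := hmono (Set.mem_Ici.2 h₁) (Set.mem_Ici.2 (h₁.trans h₁₂)) h₁₂
  simp only at h
  linarith

lemma exp_ge_pow_three {z : ℝ} (hz : 0 ≤ z) : z ^ 3 ≤ 10.8 * Real.exp (z / 2) := by
  have h1 : Real.exp 1 * (z / 6) ≤ Real.exp (z / 6) := Real.exp_one_mul_le_exp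
  have h2 : Real.exp (z / 2) = Real.exp (z / 6) ^ 3 := by
    rw [← Real.exp_nat_mul]
    congr 1
    push_cast
    ring
  have h3 : (2.718 : ℝ) < Real.exp 1 := by
    have := Real.exp_one_gt_d9
    linarith
  have h4 : 2.718 * (z / 6) ≤ Real.exp (z / 6) := by nlinarith
  have h5 := pow_le_pow_left₀ (by positivity) h4 3
  rw [h2]
  have h6 : 0 ≤ z ^ 3 := by positivity
  nlinarith

lemma pow_four_ge {β : ℝ} (hβ : 6.28 ≤ β) : 1555 ≤ β ^ 4 := by
  have := pow_le_pow_left₀ (by norm_num) hβ 4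
  norm_num at this ⊢
  linarith

/-- The condition of `slopeTerm_increment` at the four nearest lattice points `(±1/2, ±1/2)` off the
axis `m = 0`. With `r = y / √3` the left side is at most its value `3√3 / 2` at `r = 1`. -/
lemma slope_near {β y : ℝ} (hβ : 6.28 ≤ β) (hy : 0 < y) (hy3 : 3 ≤ y ^ 2) :
    2 * (1 / 4) * y ^ 3 * Real.exp (-β * (1 / 4 * y + (1 / 4 - 1) / y)) ≤ 0.414 * β := by
  have h3 : 0 < Real.sqrt 3 := by positivity
  have hsq : Real.sqrt 3 ^ 2 = 3 := Real.sq_sqrt (by norm_num)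
  have hs1 : Real.sqrt 3 < 1.7321 := by
    rw [Real.sqrt_lt' (by norm_num)]
    norm_num
  obtain ⟨r, hr⟩ : ∃ r, r = y / Real.sqrt 3 := ⟨_, rfl⟩
  have hyr : y = Real.sqrt 3 * r := by
    rw [hr]
    field_simp
  have hr0 : 0 < r := by rw [hr]; positivity
  have hr1 : 1 ≤ r := by
    rw [hyr, mul_pow, hsq] at hy3
    nlinarith
  set Z := β * (1 / 4 * y + (1 / 4 - 1) / y) with hZ
  have hZ2 : 2.7 * (r - 1 / r) ≤ Z := by
    have e : Z = β * Real.sqrt 3 / 4 * (r - 1 / r) := by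
      rw [hZ, hyr]
      field_simp
      rw [hsq]
      ring
    rw [e]
    have hs2 : 1.732 < Real.sqrt 3 := by
      rw [Real.lt_sqrt (by norm_num)]
      norm_num
    have : 0 ≤ r - 1 / r := by
      rw [sub_nonneg, div_le_iff₀ hr0]
      nlinarith
    refine mul_le_mul_of_nonneg_right ?_ this
    nlinarith
  have h1 : r ≤ (1 + Z / 6) ^ 2 := by
    have h2 : 1 + 0.45 * (r - 1 / r) ≤ 1 + Z / 6 := by linarith
    have h0 : 0 ≤ r - 1 / r := by
      rw [sub_nonneg, div_le_iff₀ hr0]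
      nlinarith
    have h4 := pow_le_pow_left₀ (by positivity) h2 2
    refine le_trans ?_ h4
    have e : (1 + 0.45 * (r - 1 / r)) ^ 2 - r =
        (r - 1) * (0.9 * (r + 1) * r + 0.2025 * (r - 1) * (r + 1) ^ 2 - r ^ 2) / r ^ 2 := by
      field_simp
      ring
    have h5 : 0 ≤ 0.9 * (r + 1) * r + 0.2025 * (r - 1) * (r + 1) ^ 2 - r ^ 2 := by
      nlinarith [mul_nonneg (sub_nonneg.2 hr1) (sq_nonneg (r - 1)), sq_nonneg (r - 1)]
    have h6 : 0 ≤ (r - 1) * (0.9 * (r + 1) * r + 0.2025 * (r - 1) * (r + 1) ^ 2 - r ^ 2) / r ^ 2 :=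
      div_nonneg (mul_nonneg (sub_nonneg.2 hr1) h5) (by positivity)
    linarith
  have h0 : 0 ≤ Z := by
    have : 0 ≤ r - 1 / r := by
      rw [sub_nonneg, div_le_iff₀ hr0]
      nlinarith
    nlinarith
  have h2 : r ^ 3 ≤ Real.exp Z := by
    have h4 : Real.exp Z = Real.exp (Z / 6) ^ 6 := by
      rw [← Real.exp_nat_mul]
      congr 1
      push_cast
      ring
    have h5 : 1 + Z / 6 ≤ Real.exp (Z / 6) := by
      have := Real.add_one_le_exp (Z / 6)
      linarith
    calc r ^ 3 ≤ ((1 + Z / 6) ^ 2) ^ 3 := pow_le_pow_left₀ hr0.le h1 3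
      _ = (1 + Z / 6) ^ 6 := by ring
      _ ≤ Real.exp Z := by
        rw [h4]
        exact pow_le_pow_left₀ (by positivity) h5 6
  have h6 : -β * (1 / 4 * y + (1 / 4 - 1) / y) = -Z := by rw [hZ]; ring
  rw [h6, Real.exp_neg]
  have hE := Real.exp_pos Z
  have h7 : r ^ 3 * (Real.exp Z)⁻¹ ≤ 1 := by
    rw [← div_eq_mul_inv, div_le_one hE]
    exact h2
  have h8 : y ^ 3 = 3 * Real.sqrt 3 * r ^ 3 := by
    rw [hyr, mul_pow, pow_succ (Real.sqrt 3) 2, hsq]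
  rw [h8]
  have h9 : 0 ≤ r ^ 3 * (Real.exp Z)⁻¹ := by positivity
  nlinarith

/-- The condition of `slopeTerm_increment` at the remaining lattice points off the axis `m = 0`,
written as `(m, n) = (p / 2, q / 2)`. -/
lemma slope_far {β y : ℝ} (hβ : 6.28 ≤ β) (hy : 0 < y) (hy3 : 3 ≤ y ^ 2) {p q : ℕ} (hp : 1 ≤ p)
    (hpq : (2 ≤ p ∧ q ≤ 2) ∨ 3 ≤ q) :
    2 * ((p : ℝ) / 2) ^ 2 * y ^ 3 *
      Real.exp (-β * (((p : ℝ) / 2) ^ 2 * y + (((q : ℝ) / 2) ^ 2 - 1) / y)) ≤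
      0.02 * (1 / 2) ^ (max p q) * β := by
  have hβ0 : 0 < β := by linarith
  have hp0 : (1 : ℝ) ≤ p := by exact_mod_cast hp
  set m : ℝ := (p : ℝ) / 2 with hm
  set n : ℝ := (q : ℝ) / 2 with hn
  have hm0 : 0 < m := by rw [hm]; positivity
  have hβ4 := pow_four_ge hβ
  set z := β * m ^ 2 * y with hz
  have hz0 : 0 < z := by positivity
  have hz3 := exp_ge_pow_three hz0.le
  have hy1 : 1.732 < y := by nlinarith
  -- the factor `z³ e^{-z/2}` is bounded, what is left of the exponent provides the decay
  suffices H : Real.exp (z / 2) * Real.exp (-β * (m ^ 2 * y + (n ^ 2 - 1) / y)) * 21.6 ≤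
      0.02 * (1 / 2) ^ (max p q) * (1555 * m ^ 4) by
    set P := Real.exp (-β * (m ^ 2 * y + (n ^ 2 - 1) / y)) with hP
    have hP0 : 0 < P := Real.exp_pos _
    have h1 : z ^ 3 * P * 2 ≤ 0.02 * (1 / 2) ^ (max p q) * (β ^ 4 * m ^ 4) := by
      calc z ^ 3 * P * 2 ≤ 10.8 * Real.exp (z / 2) * P * 2 := by gcongr
        _ = Real.exp (z / 2) * P * 21.6 := by ring
        _ ≤ _ := H
        _ ≤ _ := by gcongr
    have h2 : z ^ 3 * P * 2 = (2 * m ^ 2 * y ^ 3 * P) * (β ^ 3 * m ^ 4) := by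
      rw [hz]
      ring
    have h3 : 0.02 * (1 / 2) ^ (max p q) * (β ^ 4 * m ^ 4) =
        (0.02 * (1 / 2) ^ (max p q) * β) * (β ^ 3 * m ^ 4) := by ring
    rw [h2, h3] at h1
    exact le_of_mul_le_mul_right h1 (by positivity)
  rw [← Real.exp_add]
  rcases hpq with ⟨hp2, hq2⟩ | hq3
  · have hp2' : (2 : ℝ) ≤ p := by exact_mod_cast hp2
    have hm1 : 1 ≤ m := by rw [hm]; linarith
    rw [max_eq_left (hq2.trans hp2)]
    have h1 : z / 2 + -β * (m ^ 2 * y + (n ^ 2 - 1) / y) ≤ -(0.9 * p) := by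
      have h2 : -1 / y ≤ (n ^ 2 - 1) / y := by
        apply div_le_div_of_nonneg_right _ hy.le
        nlinarith [sq_nonneg n]
      have h3 : -(m ^ 2 * y / 3) ≤ -1 / y := by
        rw [le_div_iff₀ hy]
        nlinarith
      have h4 : m ^ 2 * y + (n ^ 2 - 1) / y ≥ 2 / 3 * (m ^ 2 * y) := by linarith
      have h5 : β * (2 / 3 * (m ^ 2 * y)) ≤ β * (m ^ 2 * y + (n ^ 2 - 1) / y) :=
        mul_le_mul_of_nonneg_left h4 hβ0.le
      have h6 : 10.86 * m ≤ z := by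
        have h7 : m ≤ m ^ 2 := by nlinarith
        have h8 : 10.86 ≤ β * y := by nlinarith
        rw [hz]
        nlinarith
      have h9 : (p : ℝ) = 2 * m := by rw [hm]; ring
      rw [h9]
      nlinarith
    have h2 : Real.exp (-(0.9 * p)) ≤ (1 / 2) ^ p := by
      rw [show -(0.9 * (p : ℝ)) = p * (-0.9) by ring, Real.exp_nat_mul]
      refine pow_le_pow_left₀ (Real.exp_pos _).le ?_ p
      rw [Real.exp_neg, one_div]
      apply inv_anti₀ (by norm_num)
      have := Real.quadratic_le_exp_of_nonneg (show (0 : ℝ) ≤ 0.9 by norm_num)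
      norm_num at this ⊢
      linarith
    have h3 : (1 : ℝ) ≤ m ^ 4 := one_le_pow₀ hm1
    have h4 := (Real.exp_le_exp.2 h1).trans h2
    have h5 : (0 : ℝ) < (1 / 2) ^ p := by positivity
    nlinarith
  · have hq3' : (3 : ℝ) ≤ q := by exact_mod_cast hq3
    have hn1 : 3 / 2 ≤ n := by rw [hn]; linarith
    have h1 : z / 2 + -β * (m ^ 2 * y + (n ^ 2 - 1) / y) ≤ -(1.64 * (p * q : ℕ)) := by
      have h2 : 5 / 9 * n ^ 2 / y ≤ (n ^ 2 - 1) / y := by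
        apply div_le_div_of_nonneg_right _ hy.le
        nlinarith
      have h3 : 1.05 * (m * n) ≤ 1 / 2 * (m ^ 2 * y) + 5 / 9 * n ^ 2 / y := by
        have e : 1 / 2 * (m ^ 2 * y) + 5 / 9 * n ^ 2 / y - 1.05 * (m * n) =
            (1 / 2 * (m * y) ^ 2 + 5 / 9 * n ^ 2 - 1.05 * (m * y) * n) / y := by
          field_simp
        have : 0 ≤ (1 / 2 * (m * y) ^ 2 + 5 / 9 * n ^ 2 - 1.05 * (m * y) * n) / y := by
          apply div_nonneg _ hy.le
          nlinarith [sq_nonneg (m * y - 1.05 * n), sq_nonneg n]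
        linarith
      have h4 : 1 / 2 * (m ^ 2 * y) + 1.05 * (m * n) ≤ m ^ 2 * y + (n ^ 2 - 1) / y := by linarith
      have h5 := mul_le_mul_of_nonneg_left h4 hβ0.le
      have h6 : ((p * q : ℕ) : ℝ) = 4 * (m * n) := by
        rw [hm, hn]
        push_cast
        ring
      rw [h6]
      have h7 : 0 < m * n := by positivity
      nlinarith
    have h2 : Real.exp (-(1.64 * (p * q : ℕ))) ≤ (1 / 5) ^ (p * q) := by
      rw [show -(1.64 * ((p * q : ℕ) : ℝ)) = (p * q : ℕ) * (-1.64) by ring, Real.exp_nat_mul]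
      refine pow_le_pow_left₀ (Real.exp_pos _).le ?_ _
      rw [Real.exp_neg, one_div]
      apply inv_anti₀ (by norm_num)
      have h7 := Real.sum_le_exp_of_nonneg (show (0 : ℝ) ≤ 1.64 by norm_num) 7
      norm_num [Finset.sum_range_succ, Nat.factorial] at h7 ⊢
      linarith
    have h3 : (1 / 16 : ℝ) ≤ m ^ 4 := by
      have : (1 / 2 : ℝ) ≤ m := by rw [hm]; linarith
      have := pow_le_pow_left₀ (by norm_num) this 4
      norm_num at this ⊢
      linarith
    have h4 := (Real.exp_le_exp.2 h1).trans h2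
    have hM : max p q ≤ p * q :=
      max_le (Nat.le_mul_of_pos_right p (by omega)) (Nat.le_mul_of_pos_left q hp)
    have hM3 : 3 ≤ p * q := hq3.trans (Nat.le_mul_of_pos_left q hp)
    have h5 : ((1 : ℝ) / 2) ^ (p * q) ≤ (1 / 2) ^ (max p q) :=
      pow_le_pow_of_le_one (by norm_num) (by norm_num) hM
    have h6 : ((1 : ℝ) / 5) ^ (p * q) ≤ (2 / 5) ^ 3 * (1 / 2) ^ (p * q) := by
      have e : ((1 : ℝ) / 5) ^ (p * q) = (2 / 5) ^ (p * q) * (1 / 2) ^ (p * q) := by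
        rw [← mul_pow]
        norm_num
      rw [e]
      refine mul_le_mul_of_nonneg_right ?_ (by positivity)
      exact pow_le_pow_of_le_one (by norm_num) (by norm_num) hM3
    have h7 : (0 : ℝ) < (1 / 2) ^ (max p q) := by positivity
    have h8 : (2 / 5 : ℝ) ^ 3 = 0.064 := by norm_num
    rw [h8] at h6
    have h9 : Real.exp (z / 2 + -β * (m ^ 2 * y + (n ^ 2 - 1) / y)) ≤
        0.064 * (1 / 2) ^ (max p q) := by linarith
    have h10 := mul_le_mul_of_nonneg_left h3 h7.le
    linarith

lemma slopeTerm_natAbs (β y : ℝ) (p q : ℤ) :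
    slopeTerm β y ((p : ℝ) / 2) ((q : ℝ) / 2) =
      slopeTerm β y ((p.natAbs : ℝ) / 2) ((q.natAbs : ℝ) / 2) := by
  have h : ∀ n : ℤ, ((n.natAbs : ℝ) / 2) ^ 2 = ((n : ℝ) / 2) ^ 2 := by
    intro n
    rw [Nat.cast_natAbs, Int.cast_abs, div_pow, sq_abs, div_pow]
  unfold slopeTerm
  rw [h, h]

lemma latWeight_eq_max (p : ℤ × ℤ) :
    latWeight p = (1 / 2) ^ (max (p.1 + p.2).natAbs (p.1 - p.2).natAbs) := by
  unfold latWeight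
  rw [← pow_add]
  congr 1
  omega

lemma slopeTerm_zero_one_lt {β y₁ y₂ : ℝ} (hβ : 0 < β) (h₁ : 0 < y₁) (h₁₂ : y₁ < y₂) :
    slopeTerm β y₁ 0 1 < slopeTerm β y₂ 0 1 := by
  have h : 1 / y₂ < 1 / y₁ := one_div_lt_one_div_of_lt h₁ h₁₂
  have e : ∀ y : ℝ, slopeTerm β y 0 1 = Real.exp (-β * (1 / y)) := by
    intro y
    simp [slopeTerm]
  rw [e, e, Real.exp_lt_exp]
  nlinarith

/-- The index pairs of the lattice points `(m, n) = (0, ±1)`. -/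
def axisPts : Finset (ℤ × ℤ) := {(1, -1), (-1, 1)}

/-- The index pairs of the lattice points `(m, n) = (±1/2, ±1/2)`. -/
def nearPts : Finset (ℤ × ℤ) := {(1, 0), (-1, 0), (0, 1), (0, -1)}

/-- Lower bound for the growth of the term with index `p` of `y² g'(y) / β`, in units of the growth
of the term `(m, n) = (0, 1)`. -/
noncomputable def outerBound (p : ℤ × ℤ) : ℝ :=
  (if p ∈ axisPts then 1 else 0) + (if p ∈ nearPts then -0.414 else 0) + latWeight p * (-0.02)

lemma hasSum_outerBound : HasSum outerBound 0.164 := by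
  have h := ((hasSum_finset_indicator axisPts 1).add
    (hasSum_finset_indicator nearPts (-0.414))).add (hasSum_latWeight.mul_right (-0.02))
  have e : ((axisPts.card : ℝ) * 1 + (nearPts.card : ℝ) * (-0.414) + 9 * (-0.02)) = 0.164 := by
    rw [show axisPts.card = 2 by decide, show nearPts.card = 4 by decide]
    norm_num
  rw [e] at h
  exact h

lemma outerBound_le {β : ℝ} (hβ : 6.28 ≤ β) {y₁ y₂ : ℝ} (h₁ : Real.sqrt 3 ≤ y₁) (h₁₂ : y₁ < y₂)
    (p : ℤ × ℤ) :
    outerBound p * (slopeTerm β y₂ 0 1 - slopeTerm β y₁ 0 1) ≤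
      slopeTerm β y₂ ((p.1 + p.2) / 2) ((p.1 - p.2) / 2) -
        slopeTerm β y₁ ((p.1 + p.2) / 2) ((p.1 - p.2) / 2) := by
  have hβ0 : 0 < β := by linarith
  have h3 : 0 < Real.sqrt 3 := by positivity
  have hΔ := sub_pos.2 (slopeTerm_zero_one_lt hβ0 (h3.trans_le h₁) h₁₂)
  have hw := latWeight_pos p
  suffices H : ∃ l, outerBound p ≤ l ∧ l * (slopeTerm β y₂ 0 1 - slopeTerm β y₁ 0 1) ≤
      slopeTerm β y₂ ((p.1 + p.2) / 2) ((p.1 - p.2) / 2) -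
        slopeTerm β y₁ ((p.1 + p.2) / 2) ((p.1 - p.2) / 2) by
    obtain ⟨l, h4, h5⟩ := H
    exact (mul_le_mul_of_nonneg_right h4 hΔ.le).trans h5
  have e : ∀ y, slopeTerm β y ((p.1 + p.2) / 2) ((p.1 - p.2) / 2) =
      slopeTerm β y (((p.1 + p.2).natAbs : ℝ) / 2) (((p.1 - p.2).natAbs : ℝ) / 2) := by
    intro y
    rw [← slopeTerm_natAbs]
    push_cast
    rfl
  rw [e, e]
  obtain ⟨a, b⟩ := p
  by_cases hA : (a, b) ∈ axisPts
  · have hN : (a, b) ∉ nearPts := by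
      revert hA
      simp only [axisPts, nearPts, Finset.mem_insert, Finset.mem_singleton, Prod.mk.injEq]
      omega
    refine ⟨1, ?_, ?_⟩
    · simp only [outerBound, hA, hN, if_true, if_false]
      linarith
    · have : (a + b).natAbs = 0 ∧ (a - b).natAbs = 2 := by
        revert hA
        simp only [axisPts, Finset.mem_insert, Finset.mem_singleton, Prod.mk.injEq]
        omega
      simp only [this.1, this.2]
      norm_num
  by_cases hN : (a, b) ∈ nearPts
  · refine ⟨-0.414, ?_, ?_⟩
    · simp only [outerBound, hA, hN, if_true, if_false]
      linarith
    · have : (a + b).natAbs = 1 ∧ (a - b).natAbs = 1 := by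
        revert hN
        simp only [nearPts, Finset.mem_insert, Finset.mem_singleton, Prod.mk.injEq]
        omega
      simp only [this.1, this.2]
      refine slopeTerm_increment hβ0 ?_ h₁ h₁₂.le
      intro y hy hy3
      have h := slope_near hβ hy hy3
      norm_num at h ⊢
      exact h
  have hO : outerBound (a, b) = latWeight (a, b) * (-0.02) := by
    simp only [outerBound, hA, hN, if_false]
    ring
  by_cases h0 : (a + b).natAbs = 0
  · refine ⟨-0, ?_, ?_⟩
    · rw [hO]
      linarith
    · refine slopeTerm_increment hβ0 ?_ h₁ h₁₂.le
      intro y hy hy3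
      simp [h0]
  · refine ⟨-(0.02 * (1 / 2) ^ (max (a + b).natAbs (a - b).natAbs)), ?_, ?_⟩
    · rw [hO, latWeight_eq_max]
      apply le_of_eq
      ring
    · refine slopeTerm_increment hβ0 ?_ h₁ h₁₂.le
      intro y hy hy3
      refine slope_far hβ hy hy3 (by omega) ?_
      simp only [nearPts, Finset.mem_insert, Finset.mem_singleton, Prod.mk.injEq] at hN
      omega

lemma six_le_pi_mul {α : ℝ} (hα : 2 ≤ α) : 6.28 ≤ Real.pi * α := by
  have := Real.pi_gt_d2
  nlinarith

lemma energyDer_pos {α y : ℝ} (hα : 2 ≤ α) (hy : Real.sqrt 3 < y) : 0 < energyDer α y := by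
  have hα0 : 0 < α := by linarith
  have h3 : 0 < Real.sqrt 3 := by positivity
  have hy0 := h3.trans hy
  have hβ := six_le_pi_mul hα
  have hβ0 : 0 < Real.pi * α := by linarith
  have h := lt_of_hasSum_of_increments (hasSum_energyDer hα0 h3) (hasSum_energyDer hα0 hy0)
    hasSum_outerBound (by norm_num)
    (sub_pos.2 (slopeTerm_zero_one_lt hβ0 h3 hy)) (outerBound_le hβ le_rfl hy)
  rw [energyDer_sqrt_three hα0, mul_zero, zero_div] at h
  by_contra hn
  have : y ^ 2 * energyDer α y / (Real.pi * α) ≤ 0 :=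
    div_nonpos_of_nonpos_of_nonneg
      (mul_nonpos_of_nonneg_of_nonpos (by positivity) (not_lt.1 hn)) hβ0.le
  linarith

/-! ### Hyperbolic inequalities -/

lemma nonneg_of_hasDerivAt_nonneg {f f' : ℝ → ℝ} (h0 : f 0 = 0)
    (hd : ∀ x, HasDerivAt f (f' x) x) (hf : ∀ x, 0 ≤ x → 0 ≤ f' x) {x : ℝ} (hx : 0 ≤ x) :
    0 ≤ f x := by
  have hmono : MonotoneOn f (Set.Ici 0) := by
    refine monotoneOn_of_deriv_nonneg (convex_Ici _) ?_ ?_ ?_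
    · intro y _
      exact (hd y).continuousAt.continuousWithinAt
    · intro y _
      exact (hd y).differentiableAt.differentiableWithinAt
    · intro y hy
      rw [interior_Ici] at hy
      rw [(hd y).deriv]
      exact hf y (le_of_lt hy)
  have := hmono (Set.mem_Ici.2 le_rfl) (Set.mem_Ici.2 hx) hx
  rwa [h0] at this

lemma sinh_le_mul_cosh {x : ℝ} (hx : 0 ≤ x) : Real.sinh x ≤ x * Real.cosh x := by
  have h := nonneg_of_hasDerivAt_nonneg (f := fun x => x * Real.cosh x - Real.sinh x)
    (f' := fun x => x * Real.sinh x) (by simp) (fun x => by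
      refine (((hasDerivAt_id x).mul (Real.hasDerivAt_cosh x)).sub
        (Real.hasDerivAt_sinh x)).congr_deriv ?_
      simp) (fun x hx => mul_nonneg hx (Real.sinh_nonneg_iff.2 hx)) hx
  linarith

lemma three_mul_cosh_le {x : ℝ} (hx : 0 ≤ x) :
    3 * x * Real.cosh x ≤ (3 + x ^ 2) * Real.sinh x := by
  have h := nonneg_of_hasDerivAt_nonneg
    (f := fun x => (3 + x ^ 2) * Real.sinh x - 3 * x * Real.cosh x)
    (f' := fun x => x * (x * Real.cosh x - Real.sinh x)) (by simp) (fun x => by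
      refine ((((hasDerivAt_pow 2 x).const_add 3).mul (Real.hasDerivAt_sinh x)).sub
        (((hasDerivAt_id x).const_mul 3).mul (Real.hasDerivAt_cosh x))).congr_deriv ?_
      simp
      ring) (fun x hx => mul_nonneg hx (sub_nonneg.2 (sinh_le_mul_cosh hx))) hx
  linarith

/-- A Padé-type lower bound for `x coth x`. -/
lemma pade_sinh_le {x : ℝ} (hx : 0 ≤ x) :
    (15 + 6 * x ^ 2) * Real.sinh x ≤ x * (15 + x ^ 2) * Real.cosh x := by
  have h := nonneg_of_hasDerivAt_nonneg
    (f := fun x => (15 * x + x ^ 3) * Real.cosh x - (15 + 6 * x ^ 2) * Real.sinh x)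
    (f' := fun x => x * ((3 + x ^ 2) * Real.sinh x - 3 * x * Real.cosh x)) (by simp) (fun x => by
      refine (((((hasDerivAt_id x).const_mul 15).add (hasDerivAt_pow 3 x)).mul
        (Real.hasDerivAt_cosh x)).sub
        ((((hasDerivAt_pow 2 x).const_mul 6).const_add 15).mul
          (Real.hasDerivAt_sinh x))).congr_deriv ?_
      simp
      ring) (fun x hx => mul_nonneg hx (sub_nonneg.2 (three_mul_cosh_le hx))) hx
  linarith

lemma sinh_nat_mul_le {x : ℝ} (hx : 0 ≤ x) (D : ℕ) :
    Real.sinh ((D + 1 : ℕ) * x) ≤ (D + 1 : ℕ) * Real.exp (D * x) * Real.sinh x := by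
  induction D with
  | zero => simp
  | succ D ih =>
    have hs := Real.sinh_nonneg_iff.2 hx
    have e1 : ((D + 1 + 1 : ℕ) : ℝ) * x = (D + 1 : ℕ) * x + x := by
      push_cast
      ring
    have e2 : Real.exp ((D + 1 : ℕ) * x) = Real.exp (D * x) * Real.exp x := by
      rw [← Real.exp_add]
      congr 1
      push_cast
      ring
    have hc1 : Real.cosh x ≤ Real.exp x := by
      have := Real.cosh_add_sinh x
      linarith
    have hc2 : Real.cosh ((D + 1 : ℕ) * x) ≤ Real.exp ((D + 1 : ℕ) * x) := by
      have := Real.cosh_add_sinh ((D + 1 : ℕ) * x)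
      have := Real.sinh_nonneg_iff.2 (show 0 ≤ ((D + 1 : ℕ) : ℝ) * x by positivity)
      linarith
    rw [e1, Real.sinh_add]
    calc _ ≤ (D + 1 : ℕ) * Real.exp (D * x) * Real.sinh x * Real.exp x +
          Real.exp ((D + 1 : ℕ) * x) * Real.sinh x := by
          gcongr
      _ = _ := by
          rw [e2]
          push_cast
          ring

/-! ### Between the square and the hexagonal point -/

/-- The term of the symmetrized series for `g'`, in the coordinate `y = e^s`. Here
`k = (a² + b²) / 2` and `D = a b`; the common factor `e^{-β cosh(s) / 2} sinh s` is taken out. -/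
noncomputable def innerTerm (β k D s : ℝ) : ℝ :=
  Real.exp (-(β * (k - 1 / 2)) * Real.cosh s) *
    (D * Real.cosh s * (Real.sinh (β * D * Real.sinh s) / Real.sinh s) -
      k * Real.cosh (β * D * Real.sinh s))

lemma innerTerm_abs (β k D s : ℝ) : innerTerm β k |D| s = innerTerm β k D s := by
  rcases abs_choice D with h | h
  · rw [h]
  · rw [h]
    unfold innerTerm
    rw [show β * -D * Real.sinh s = -(β * D * Real.sinh s) by ring, Real.sinh_neg, Real.cosh_neg]
    ring

/-- Averaging the series for `g'` over the reflection `(a, b) ↦ (a, -b)`. -/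
lemma hasSum_innerTerm {α s : ℝ} (hα : 0 < α) (hs : 0 < s) :
    HasSum (fun p : ℤ × ℤ =>
        innerTerm (Real.pi * α) (((p.1 : ℝ) ^ 2 + (p.2 : ℝ) ^ 2) / 2) (p.1 * p.2) s)
      (Real.exp s * energyDer α (Real.exp s) / (Real.pi * α) / Real.sinh s *
        Real.exp (Real.pi * α * Real.cosh s / 2)) := by
  set β := Real.pi * α with hβ
  have hβ0 : 0 < β := by positivity
  have hu : 0 < Real.sinh s := Real.sinh_pos_iff.2 hs
  have hy := Real.exp_pos s
  have h1 := hasSum_energyDer hα hy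
  rw [← hβ] at h1
  let e : ℤ × ℤ ≃ ℤ × ℤ :=
    { toFun := fun p => (p.1, -p.2)
      invFun := fun p => (p.1, -p.2)
      left_inv := fun p => by ext <;> simp
      right_inv := fun p => by ext <;> simp }
  have h2 := e.hasSum_iff.2 h1
  have h3 := (h1.add h2).mul_right
    (1 / (2 * Real.exp s * Real.sinh s) * Real.exp (β * Real.cosh s / 2))
  have eq : ∀ a b : ℝ, slopeTerm β (Real.exp s) ((a + b) / 2) ((a - b) / 2) =
      -(Real.exp s * (((a ^ 2 + b ^ 2) / 2) * Real.sinh s + a * b * Real.cosh s) *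
        Real.exp (-β * (((a ^ 2 + b ^ 2) / 2) * Real.cosh s + a * b * Real.sinh s))) := by
    intro a b
    have e1 : ((a + b) / 2) ^ 2 * Real.exp s + ((a - b) / 2) ^ 2 / Real.exp s =
        ((a ^ 2 + b ^ 2) / 2) * Real.cosh s + a * b * Real.sinh s := by
      rw [Real.cosh_eq, Real.sinh_eq, Real.exp_neg]
      field_simp
      ring
    have e2 : ((a - b) / 2) ^ 2 - ((a + b) / 2) ^ 2 * Real.exp s ^ 2 =
        -(Real.exp s * (((a ^ 2 + b ^ 2) / 2) * Real.sinh s + a * b * Real.cosh s)) := by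
      rw [Real.cosh_eq, Real.sinh_eq, Real.exp_neg]
      field_simp
      ring
    unfold slopeTerm
    rw [e1, e2]
    ring
  convert! h3 using 1
  · funext p
    simp only [Function.comp_apply, e, Equiv.coe_fn_mk]
    push_cast
    rw [eq, eq]
    unfold innerTerm
    generalize (p.1 : ℝ) = a
    generalize (p.2 : ℝ) = b
    set k := (a ^ 2 + b ^ 2) / 2 with hk
    rw [show (a ^ 2 + (-b) ^ 2) / 2 = k by rw [hk]; ring]
    set C := Real.cosh s
    set u := Real.sinh s
    have e1 : Real.exp (-β * (k * C + a * b * u)) =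
        Real.exp (-(β * k * C)) * Real.exp (-(β * (a * b) * u)) := by
      rw [← Real.exp_add]
      congr 1
      ring
    have e2 : Real.exp (-β * (k * C + a * -b * u)) =
        Real.exp (-(β * k * C)) * Real.exp (β * (a * b) * u) := by
      rw [← Real.exp_add]
      congr 1
      ring
    have e3 : Real.exp (-(β * (k - 1 / 2)) * C) =
        Real.exp (-(β * k * C)) * Real.exp (β * C / 2) := by
      rw [← Real.exp_add]
      congr 1
      ring
    rw [e1, e2, e3, Real.sinh_eq, Real.cosh_eq]
    field_simp
    ring
  · field_simp
    ring

lemma hasDerivAt_innerTerm (β k D : ℝ) {s : ℝ} (hs : 0 < s) :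
    HasDerivAt (innerTerm β k D)
      (Real.exp (-(β * (k - 1 / 2)) * Real.cosh s) *
        (β * (k - 1 / 2) * k * Real.sinh s * Real.cosh (β * D * Real.sinh s)
          + D * Real.sinh (β * D * Real.sinh s)
          + D * Real.cosh s ^ 2 * ((β * D * Real.sinh s * Real.cosh (β * D * Real.sinh s) -
              Real.sinh (β * D * Real.sinh s)) / Real.sinh s ^ 2)
          - β * (2 * k - 1 / 2) * D * Real.cosh s * Real.sinh (β * D * Real.sinh s))) s := by
  have hu : Real.sinh s ≠ 0 := (Real.sinh_pos_iff.2 hs).ne'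
  have hx := (Real.hasDerivAt_sinh s).const_mul (β * D)
  have hE := ((Real.hasDerivAt_cosh s).const_mul (-(β * (k - 1 / 2)))).exp
  have h := hE.mul ((((Real.hasDerivAt_cosh s).const_mul D).mul
    (hx.sinh.div (Real.hasDerivAt_sinh s) hu)).sub (hx.cosh.const_mul k))
  refine h.congr_deriv ?_
  simp only [Pi.sub_apply, Pi.mul_apply, Pi.div_apply]
  field_simp
  ring

lemma cosh_bounds {s : ℝ} (hC : 2 * Real.sinh s ≤ Real.cosh s) (hs : 0 < s) :
    1 ≤ Real.cosh s ∧ Real.cosh s ≤ 1.1548 ∧ Real.sinh s ≤ 0.5774 := by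
  have h1 := Real.one_le_cosh s
  have hu : 0 < Real.sinh s := Real.sinh_pos_iff.2 hs
  have h2 := Real.cosh_sq s
  refine ⟨h1, ?_, ?_⟩
  · nlinarith
  · nlinarith

/-- Growth of the leading term. For small `βu` the Padé bound is used, for large `βu` only
`cosh ≥ sinh`. -/
lemma main_bracket {β u C : ℝ} (hβ : 6.28 ≤ β) (hu : 0 < u) (hC1 : 1 ≤ C) (hC2 : C ≤ 1.1548)
    (hu2 : u ≤ 0.5774) (hCu : C ^ 2 = u ^ 2 + 1) :
    C * Real.sinh (β * u) ≤
      β * (1 / 2) * u * Real.cosh (β * u) + Real.sinh (β * u) +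
        C ^ 2 * ((β * u * Real.cosh (β * u) - Real.sinh (β * u)) / u ^ 2) -
        β * (3 / 2) * C * Real.sinh (β * u) := by
  have hβ0 : 0 < β := by linarith
  set x := β * u with hx
  have hx0 : 0 < x := by positivity
  have hS : 0 < Real.sinh x := Real.sinh_pos_iff.2 hx0
  have hxc := sinh_le_mul_cosh hx0.le
  have hcs : Real.sinh x ≤ Real.cosh x := (Real.sinh_lt_cosh x).le
  have hpade := pade_sinh_le hx0.le
  set S := Real.sinh x
  set K := Real.cosh x
  rcases le_total x 2.5 with h | h
  · have h1 : 5 / 21.25 * β ^ 2 * S ≤ (x * K - S) / u ^ 2 := by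
      rw [le_div_iff₀ (by positivity)]
      have e : 5 / 21.25 * β ^ 2 * S * u ^ 2 = 5 / 21.25 * (x ^ 2 * S) := by
        rw [hx]
        ring
      rw [e]
      have h2 : 5 * (x ^ 2 * S) ≤ (x * K - S) * (15 + x ^ 2) := by linarith
      have h3 : (x * K - S) * (15 + x ^ 2) ≤ (x * K - S) * 21.25 := by
        refine mul_le_mul_of_nonneg_left ?_ (by linarith)
        nlinarith
      linarith
    have h2 := mul_le_mul_of_nonneg_left h1 (sq_nonneg C)
    have h3 : 0 ≤ 1.5 + 5 / 21.25 * (β * C) ^ 2 - 3 / 2 * (β * C) - C := by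
      have ht : 6.28 ≤ β * C := by nlinarith
      nlinarith
    have h4 := mul_nonneg h3 hS.le
    have h5 : β * (1 / 2) * u * K = 1 / 2 * (x * K) := by rw [hx]; ring
    rw [h5]
    linarith
  · have h1 : (x - 1) * S / u ^ 2 ≤ (x * K - S) / u ^ 2 := by
      gcongr
      nlinarith
    have h2 := mul_le_mul_of_nonneg_left h1 (sq_nonneg C)
    have h3 : 1 + C * u ^ 2 ≤ x * (u ^ 2 / 2 + C ^ 2 - 3 / 2 * u * C) := by
      have hQ : u ^ 2 / 2 + C ^ 2 - 3 / 2 * u * C = 1 + 3 / 2 * u ^ 2 - 3 / 2 * u * C := by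
        rw [hCu]
        ring
      rcases le_total u 0.5 with h6 | h6
      · have hC3 : C ≤ 1.1181 := by nlinarith
        have h7 : 1 + 3 / 2 * u ^ 2 - 3 / 2 * u * 1.1181 ≤
            u ^ 2 / 2 + C ^ 2 - 3 / 2 * u * C := by
          rw [hQ]
          nlinarith
        have h8 : 0 ≤ 1 + 3 / 2 * u ^ 2 - 3 / 2 * u * 1.1181 := by nlinarith
        have h9 : 2.5 * (1 + 3 / 2 * u ^ 2 - 3 / 2 * u * 1.1181) ≤
            x * (u ^ 2 / 2 + C ^ 2 - 3 / 2 * u * C) := mul_le_mul h h7 h8 hx0.le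
        nlinarith
      · have hx3 : 3.14 ≤ x := by nlinarith
        have h7 : 1 + 3 / 2 * u ^ 2 - 3 / 2 * u * 1.1548 ≤
            u ^ 2 / 2 + C ^ 2 - 3 / 2 * u * C := by
          rw [hQ]
          nlinarith
        have h8 : 0 ≤ 1 + 3 / 2 * u ^ 2 - 3 / 2 * u * 1.1548 := by nlinarith
        have h9 : 3.14 * (1 + 3 / 2 * u ^ 2 - 3 / 2 * u * 1.1548) ≤
            x * (u ^ 2 / 2 + C ^ 2 - 3 / 2 * u * C) := mul_le_mul hx3 h7 h8 hx0.le
        nlinarith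
    have h4 : 0 ≤ (x * (u ^ 2 / 2 + C ^ 2 - 3 / 2 * u * C) - (1 + C * u ^ 2)) * S / u ^ 2 := by
      have := sub_nonneg.2 h3
      positivity
    have h5 : (x * (u ^ 2 / 2 + C ^ 2 - 3 / 2 * u * C) - (1 + C * u ^ 2)) * S / u ^ 2 =
        1 / 2 * x * S + S + C ^ 2 * ((x - 1) * S / u ^ 2) - β * (3 / 2) * C * S - C * S := by
      rw [show (x * (u ^ 2 / 2 + C ^ 2 - 3 / 2 * u * C) - (1 + C * u ^ 2)) =
        x * (u ^ 2 / 2 + C ^ 2 - 3 / 2 * u * C) - (C ^ 2 - u ^ 2 + C * u ^ 2) by rw [hCu]; ring]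
      rw [hx]
      field_simp
      ring
    have h6 : 1 / 2 * x * S ≤ β * (1 / 2) * u * K := by
      rw [show β * (1 / 2) * u * K = 1 / 2 * x * K by rw [hx]; ring]
      gcongr
    linarith

/-- The coefficient bounding the decrease of the term with `|a| = p`, `|b| = q`. -/
noncomputable def innerErr (β : ℝ) (p q : ℕ) : ℝ :=
  β * ((p : ℝ) * q) ^ 2 * ((p : ℝ) ^ 2 + (q : ℝ) ^ 2 - 1 / 2) *
    Real.exp (-(β / 2) * ((p : ℝ) ^ 2 + (q : ℝ) ^ 2 - 1 - p * q))

lemma innerErr_nonneg {β : ℝ} (hβ : 0 < β) (p q : ℕ) : 0 ≤ innerErr β p q := by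
  unfold innerErr
  rcases Nat.eq_zero_or_pos p with rfl | hp
  · simp
  · have : (1 : ℝ) ≤ p := by exact_mod_cast hp
    have : 0 ≤ (p : ℝ) ^ 2 + (q : ℝ) ^ 2 - 1 / 2 := by nlinarith [sq_nonneg (q : ℝ)]
    positivity

lemma deriv_main_ge {β s : ℝ} (hβ : 6.28 ≤ β) (hs : 0 < s)
    (hC : 2 * Real.sinh s ≤ Real.cosh s) :
    Real.exp (-(β / 2) * Real.cosh s) * (Real.cosh s * Real.sinh (β * Real.sinh s)) ≤
      deriv (innerTerm β 1 1) s := by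
  obtain ⟨h1, h2, h3⟩ := cosh_bounds hC hs
  have h := main_bracket hβ (Real.sinh_pos_iff.2 hs) h1 h2 h3 (Real.cosh_sq s)
  rw [(hasDerivAt_innerTerm β 1 1 hs).deriv]
  rw [show -(β * (1 - 1 / 2)) * Real.cosh s = -(β / 2) * Real.cosh s by ring,
    show β * 1 * Real.sinh s = β * Real.sinh s by ring]
  refine mul_le_mul_of_nonneg_left ?_ (Real.exp_pos _).le
  linarith

lemma deriv_innerTerm_ge {β s : ℝ} (hβ : 0 < β) (hs : 0 < s)
    (hC : 2 * Real.sinh s ≤ Real.cosh s) (p q : ℕ) :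
    -innerErr β p q *
        (Real.exp (-(β / 2) * Real.cosh s) * (Real.cosh s * Real.sinh (β * Real.sinh s))) ≤
      deriv (innerTerm β (((p : ℝ) ^ 2 + (q : ℝ) ^ 2) / 2) ((p : ℝ) * q)) s := by
  have hu : 0 < Real.sinh s := Real.sinh_pos_iff.2 hs
  have hC1 := Real.one_le_cosh s
  rw [(hasDerivAt_innerTerm β _ _ hs).deriv]
  set u := Real.sinh s
  set C := Real.cosh s
  set k := ((p : ℝ) ^ 2 + (q : ℝ) ^ 2) / 2 with hk
  have hkk : 0 ≤ (k - 1 / 2) * k := by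
    rcases Nat.eq_zero_or_pos p with hp | hp
    · rcases Nat.eq_zero_or_pos q with hq | hq
      · simp [hk, hp, hq]
      · have : (1 : ℝ) ≤ q := by exact_mod_cast hq
        have : 1 / 2 ≤ k := by rw [hk]; nlinarith [sq_nonneg (p : ℝ)]
        nlinarith
    · have : (1 : ℝ) ≤ p := by exact_mod_cast hp
      have : 1 / 2 ≤ k := by rw [hk]; nlinarith [sq_nonneg (q : ℝ)]
      nlinarith
  have hD0 : (0 : ℝ) ≤ (p : ℝ) * q := by positivity
  set D : ℝ := (p : ℝ) * q with hD
  have hx0 : 0 ≤ β * D * u := by positivity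
  have hS0 := Real.sinh_nonneg_iff.2 hx0
  have hxc := sinh_le_mul_cosh hx0
  have hK0 := Real.cosh_pos (β * D * u)
  have t1 : 0 ≤ β * (k - 1 / 2) * k * u * Real.cosh (β * D * u) := by
    rw [mul_assoc β]
    positivity
  have t2 : 0 ≤ D * Real.sinh (β * D * u) := by positivity
  have t3 : 0 ≤ D * C ^ 2 *
      ((β * D * u * Real.cosh (β * D * u) - Real.sinh (β * D * u)) / u ^ 2) := by
    have := sub_nonneg.2 hxc
    positivity
  have hE := Real.exp_pos (-(β * (k - 1 / 2)) * C)
  have step1 : -(Real.exp (-(β * (k - 1 / 2)) * C) *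
      (β * (2 * k - 1 / 2) * D * C * Real.sinh (β * D * u))) ≤
      Real.exp (-(β * (k - 1 / 2)) * C) *
        (β * (k - 1 / 2) * k * u * Real.cosh (β * D * u) + D * Real.sinh (β * D * u)
          + D * C ^ 2 * ((β * D * u * Real.cosh (β * D * u) - Real.sinh (β * D * u)) / u ^ 2)
          - β * (2 * k - 1 / 2) * D * C * Real.sinh (β * D * u)) := by
    rw [← mul_neg]
    refine mul_le_mul_of_nonneg_left ?_ hE.le
    linarith
  refine le_trans ?_ step1
  rw [neg_mul, neg_le_neg_iff]
  rcases Nat.eq_zero_or_pos (p * q) with h0 | h0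
  · have hD0 : D = 0 := by
      rw [hD]
      exact_mod_cast h0
    rw [hD0]
    have : innerErr β p q = 0 := by
      unfold innerErr
      rw [← hD, hD0]
      ring
    simp [this]
  obtain ⟨d, hd⟩ : ∃ d, p * q = d + 1 := ⟨p * q - 1, by omega⟩
  have hDd : D = (d + 1 : ℕ) := by
    rw [← hd, hD]
    push_cast
    ring
  have hDd' : (d : ℝ) = D - 1 := by
    rw [hDd]
    push_cast
    ring
  have hxu : 0 ≤ β * u := by positivity
  have hsn := sinh_nat_mul_le hxu d
  rw [← hDd, hDd', show D * (β * u) = β * D * u by ring] at hsn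
  have hp1 : 1 ≤ p := Nat.pos_of_mul_pos_right h0
  have hq1 : 1 ≤ q := Nat.pos_of_mul_pos_left h0
  have hp1' : (1 : ℝ) ≤ p := by exact_mod_cast hp1
  have hq1' : (1 : ℝ) ≤ q := by exact_mod_cast hq1
  have hk1 : 1 ≤ k := by rw [hk]; nlinarith
  have hN : 0 ≤ 2 * k - 1 - D := by
    rw [hk, hD]
    nlinarith [sq_nonneg ((p : ℝ) - q)]
  have hD1 : 1 ≤ D := by rw [hD]; nlinarith
  have hexp : Real.exp (-(β * (k - 1 / 2)) * C) * Real.exp ((D - 1) * (β * u)) ≤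
      Real.exp (-(β / 2) * (2 * k - 1 - D)) * Real.exp (-(β / 2) * C) := by
    rw [← Real.exp_add, ← Real.exp_add, Real.exp_le_exp]
    have e1 : (D - 1) * (β * u) ≤ (D - 1) * (β * (C / 2)) := by
      refine mul_le_mul_of_nonneg_left ?_ (by linarith)
      refine mul_le_mul_of_nonneg_left ?_ hβ.le
      linarith
    have e2 : 0 ≤ β / 2 * (2 * k - 1 - D) * (C - 1) := by
      have := sub_nonneg.2 hC1
      positivity
    nlinarith
  have hSu := Real.sinh_nonneg_iff.2 hxu
  have hk2 : 0 ≤ 2 * k - 1 / 2 := by linarith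
  have hC0 : 0 ≤ C := by linarith
  calc Real.exp (-(β * (k - 1 / 2)) * C) *
        (β * (2 * k - 1 / 2) * D * C * Real.sinh (β * D * u))
      ≤ Real.exp (-(β * (k - 1 / 2)) * C) * (β * (2 * k - 1 / 2) * D * C *
          (D * Real.exp ((D - 1) * (β * u)) * Real.sinh (β * u))) := by
        gcongr
    _ = (Real.exp (-(β * (k - 1 / 2)) * C) * Real.exp ((D - 1) * (β * u))) *
          (β * (2 * k - 1 / 2) * D ^ 2 * C * Real.sinh (β * u)) := by ring
    _ ≤ (Real.exp (-(β / 2) * (2 * k - 1 - D)) * Real.exp (-(β / 2) * C)) *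
          (β * (2 * k - 1 / 2) * D ^ 2 * C * Real.sinh (β * u)) := by
        gcongr
    _ = _ := by
        unfold innerErr
        rw [← hD, show (p : ℝ) ^ 2 + (q : ℝ) ^ 2 = 2 * k by rw [hk]; ring]
        ring

lemma exp_six_ge : 530 ≤ Real.exp 6.28 := by
  have h1 : (2.7182 : ℝ) ≤ Real.exp 1 := by
    have := Real.exp_one_gt_d9
    linarith
  have h2 := pow_le_pow_left₀ (by norm_num) h1 6
  have h3 := Real.quadratic_le_exp_of_nonneg (show (0 : ℝ) ≤ 0.28 by norm_num)
  have h4 : Real.exp 6.28 = Real.exp 1 ^ 6 * Real.exp 0.28 := by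
    rw [← Real.exp_nat_mul, ← Real.exp_add]
    norm_num
  rw [h4]
  calc (530 : ℝ) ≤ 2.7182 ^ 6 * (1 + 0.28 + 0.28 ^ 2 / 2) := by norm_num
    _ ≤ _ := mul_le_mul h2 h3 (by norm_num) (by positivity)

lemma exp_neg_le {β : ℝ} (hβ : 6.28 ≤ β) : Real.exp (-β) ≤ 1 / 530 := by
  rw [Real.exp_neg, one_div]
  exact inv_anti₀ (by norm_num) (exp_six_ge.trans (Real.exp_le_exp.2 hβ))

lemma mul_exp_neg_le {β : ℝ} (hβ : 6.28 ≤ β) : β * Real.exp (-β) ≤ 0.0119 := by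
  have h1 := Real.add_one_le_exp (β - 6.28)
  have h2 : Real.exp β = Real.exp 6.28 * Real.exp (β - 6.28) := by
    rw [← Real.exp_add]
    congr 1
    ring
  have h3 : 530 * (β - 6.28 + 1) ≤ Real.exp β := by
    rw [h2]
    exact mul_le_mul exp_six_ge h1 (by linarith) (Real.exp_pos _).le
  rw [Real.exp_neg, ← div_eq_mul_inv, div_le_iff₀ (Real.exp_pos _)]
  linarith

lemma innerErr_comm (β : ℝ) (p q : ℕ) : innerErr β p q = innerErr β q p := by
  unfold innerErr
  congr 1
  · ring
  · congr 1
    ring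

lemma innerErr_one_two {β : ℝ} (hβ : 6.28 ≤ β) : innerErr β 1 2 ≤ 0.22 := by
  have h := mul_exp_neg_le hβ
  unfold innerErr
  push_cast
  rw [show -(β / 2) * ((1 : ℝ) ^ 2 + 2 ^ 2 - 1 - 1 * 2) = -β by ring]
  linarith

lemma innerErr_two_two {β : ℝ} (hβ : 6.28 ≤ β) : innerErr β 2 2 ≤ 0.07 := by
  have h := mul_exp_neg_le hβ
  have h1 := exp_neg_le hβ
  have h2 : Real.exp (-β / 2) ≤ 1 / 23 := by
    have e : Real.exp (-β) = Real.exp (-β / 2) ^ 2 := by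
      rw [← Real.exp_nat_mul]
      congr 1
      push_cast
      ring
    rw [e] at h1
    have := Real.exp_pos (-β / 2)
    nlinarith
  unfold innerErr
  push_cast
  rw [show -(β / 2) * ((2 : ℝ) ^ 2 + 2 ^ 2 - 1 - 2 * 2) = -β + -β / 2 by ring, Real.exp_add]
  have h3 : β * Real.exp (-β) * Real.exp (-β / 2) ≤ 0.0119 * (1 / 23) :=
    mul_le_mul h h2 (Real.exp_pos _).le (by norm_num)
  nlinarith

lemma pow_six_le (j : ℕ) : ((j : ℝ) + 4) ^ 6 ≤ 4096 * 4 ^ j := by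
  induction j with
  | zero => norm_num
  | succ j ih =>
    have h1 : (((j + 1 : ℕ) : ℝ) + 4) ≤ 5 / 4 * ((j : ℝ) + 4) := by
      push_cast
      have : (0 : ℝ) ≤ j := by positivity
      linarith
    have h2 := pow_le_pow_left₀ (by positivity) h1 6
    rw [mul_pow] at h2
    have h3 : (0 : ℝ) ≤ ((j : ℝ) + 4) ^ 6 := by positivity
    rw [pow_succ (4 : ℝ) j]
    norm_num at h2 ⊢
    linarith

/-- All remaining error coefficients; `p² + q² - 1 - pq ≥ 2(p + q) - 4` holds for these. -/
lemma innerErr_far {β : ℝ} (hβ : 6.28 ≤ β) {p q : ℕ} (hp : 1 ≤ p) (hq : 1 ≤ q) (hpq : 4 ≤ p + q)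
    (h22 : ¬(p = 2 ∧ q = 2)) : innerErr β p q ≤ 0.1 * ((1 / 2) ^ p * (1 / 2) ^ q) := by
  have hβ0 : 0 < β := by linarith
  have hp' : (1 : ℝ) ≤ p := by exact_mod_cast hp
  have hq' : (1 : ℝ) ≤ q := by exact_mod_cast hq
  obtain ⟨j, hj⟩ : ∃ j, p + q = j + 4 := ⟨p + q - 4, by omega⟩
  have hjr : (p : ℝ) + q = j + 4 := by exact_mod_cast hj
  have hN : 2 * ((j : ℝ) + 2) ≤ (p : ℝ) ^ 2 + (q : ℝ) ^ 2 - 1 - p * q := by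
    have hz : 2 * ((p : ℤ) + q) - 4 ≤ (p : ℤ) ^ 2 + (q : ℤ) ^ 2 - 1 - p * q := by
      rcases le_or_gt 6 (p + q) with h6 | h6
      · have h6' : (6 : ℤ) ≤ p + q := by exact_mod_cast h6
        nlinarith [sq_nonneg ((p : ℤ) - q)]
      · have hp5 : p ≤ 4 := by omega
        have hq5 : q ≤ 4 := by omega
        interval_cases p <;> interval_cases q <;> simp_all
    have hz' : 2 * ((p : ℝ) + q) - 4 ≤ (p : ℝ) ^ 2 + (q : ℝ) ^ 2 - 1 - p * q := by
      exact_mod_cast hz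
    linarith
  have hexp : Real.exp (-(β / 2) * ((p : ℝ) ^ 2 + (q : ℝ) ^ 2 - 1 - p * q)) ≤
      Real.exp (-β) * (1 / 530) ^ (j + 1) := by
    have h1 : Real.exp (-(β / 2) * ((p : ℝ) ^ 2 + (q : ℝ) ^ 2 - 1 - p * q)) ≤
        Real.exp (-β) * Real.exp ((j + 1 : ℕ) * (-β)) := by
      rw [← Real.exp_add, Real.exp_le_exp]
      push_cast
      nlinarith
    refine h1.trans ?_
    refine mul_le_mul_of_nonneg_left ?_ (Real.exp_pos _).le
    rw [Real.exp_nat_mul]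
    exact pow_le_pow_left₀ (Real.exp_pos _).le (exp_neg_le hβ) _
  have hpoly : ((p : ℝ) * q) ^ 2 * ((p : ℝ) ^ 2 + (q : ℝ) ^ 2 - 1 / 2) ≤ 256 * 4 ^ j := by
    have h1 : (p : ℝ) * q ≤ ((j : ℝ) + 4) ^ 2 / 4 := by
      rw [← hjr]
      nlinarith [sq_nonneg ((p : ℝ) - q)]
    have h2 : (p : ℝ) ^ 2 + (q : ℝ) ^ 2 - 1 / 2 ≤ ((j : ℝ) + 4) ^ 2 := by
      rw [← hjr]
      nlinarith
    have h3 := pow_le_pow_left₀ (by positivity) h1 2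
    have h4 := mul_le_mul h3 h2 (by nlinarith) (by positivity)
    refine h4.trans ?_
    have := pow_six_le j
    nlinarith
  have hm := mul_exp_neg_le hβ
  have hpoly0 : 0 ≤ ((p : ℝ) * q) ^ 2 * ((p : ℝ) ^ 2 + (q : ℝ) ^ 2 - 1 / 2) := by
    have : 0 ≤ (p : ℝ) ^ 2 + (q : ℝ) ^ 2 - 1 / 2 := by nlinarith
    positivity
  calc innerErr β p q = β * (((p : ℝ) * q) ^ 2 * ((p : ℝ) ^ 2 + (q : ℝ) ^ 2 - 1 / 2)) *
        Real.exp (-(β / 2) * ((p : ℝ) ^ 2 + (q : ℝ) ^ 2 - 1 - p * q)) := by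
        unfold innerErr
        ring
    _ ≤ β * (256 * 4 ^ j) * (Real.exp (-β) * (1 / 530) ^ (j + 1)) := by gcongr
    _ = (β * Real.exp (-β)) * (256 * 4 ^ j * (1 / 530) ^ (j + 1)) := by ring
    _ ≤ 0.0119 * (256 * 4 ^ j * (1 / 530) ^ (j + 1)) := by gcongr
    _ = 0.0119 * 256 / 530 * (4 / 530) ^ j := by
        rw [pow_succ, show (4 : ℝ) / 530 = 4 * (1 / 530) by norm_num, mul_pow]
        ring
    _ ≤ 0.1 / 16 * (1 / 2) ^ j := by
        refine mul_le_mul (by norm_num) ?_ (by positivity) (by norm_num)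
        exact pow_le_pow_left₀ (by norm_num) (by norm_num) j
    _ = 0.1 * ((1 / 2) ^ p * (1 / 2) ^ q) := by
        rw [← pow_add, hj, pow_add]
        norm_num
        ring

lemma two_mul_sinh_le {s : ℝ} (hs : s ≤ Real.log (Real.sqrt 3)) :
    2 * Real.sinh s ≤ Real.cosh s := by
  have h3 : 0 < Real.sqrt 3 := by positivity
  have h1 : Real.exp s ≤ Real.sqrt 3 := (Real.le_log_iff_exp_le h3).1 hs
  have h2 : Real.exp s * Real.exp (-s) = 1 := by rw [← Real.exp_add]; simp
  have h4 := Real.sq_sqrt (show (0 : ℝ) ≤ 3 by norm_num)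
  have hp := Real.exp_pos s
  have hn := Real.exp_pos (-s)
  have h5 : Real.exp s ^ 2 ≤ 3 := by nlinarith
  have h6 : Real.exp s ≤ 3 * Real.exp (-s) := by
    have : Real.exp s * (Real.exp s * Real.exp (-s)) ≤ 3 * Real.exp (-s) := by nlinarith
    rwa [h2, mul_one] at this
  rw [Real.sinh_eq, Real.cosh_eq]
  linarith

/-- The term with `|a| = p`, `|b| = q` decreases by at most `innerErr β p q` times the growth of the
leading term `|a| = |b| = 1`. -/
lemma innerTerm_increment {β s₁ s₂ c : ℝ} (hβ : 6.28 ≤ β) (h₁ : 0 < s₁) (h₁₂ : s₁ ≤ s₂)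
    (h₂ : s₂ ≤ Real.log (Real.sqrt 3)) (p q : ℕ) (hc : innerErr β p q ≤ c) :
    -c * (innerTerm β 1 1 s₂ - innerTerm β 1 1 s₁) ≤
      innerTerm β (((p : ℝ) ^ 2 + (q : ℝ) ^ 2) / 2) ((p : ℝ) * q) s₂ -
        innerTerm β (((p : ℝ) ^ 2 + (q : ℝ) ^ 2) / 2) ((p : ℝ) * q) s₁ := by
  have hβ0 : 0 < β := by linarith
  have hd : ∀ k D s : ℝ, 0 < s → DifferentiableAt ℝ (innerTerm β k D) s :=
    fun k D s hs => (hasDerivAt_innerTerm β k D hs).differentiableAt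
  set k := ((p : ℝ) ^ 2 + (q : ℝ) ^ 2) / 2 with hk
  set D := (p : ℝ) * q with hD
  have hd2 : ∀ s : ℝ, 0 < s →
      DifferentiableAt ℝ (fun s => innerTerm β k D s + c * innerTerm β 1 1 s) s :=
    fun s hs => (hd k D s hs).add ((hd 1 1 s hs).const_mul c)
  have hmono : MonotoneOn (fun s => innerTerm β k D s + c * innerTerm β 1 1 s)
      (Set.Icc s₁ s₂) := by
    refine monotoneOn_of_deriv_nonneg (convex_Icc _ _) ?_ ?_ ?_
    · intro s hs
      exact (hd2 s (h₁.trans_le hs.1)).continuousAt.continuousWithinAt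
    · intro s hs
      rw [interior_Icc] at hs
      exact (hd2 s (h₁.trans hs.1)).differentiableWithinAt
    · intro s hs
      rw [interior_Icc] at hs
      have hs0 := h₁.trans hs.1
      have hC := two_mul_sinh_le (hs.2.le.trans h₂)
      have e : deriv (fun s => innerTerm β k D s + c * innerTerm β 1 1 s) s =
          deriv (innerTerm β k D) s + c * deriv (innerTerm β 1 1) s :=
        ((hd k D s hs0).hasDerivAt.add ((hd 1 1 s hs0).hasDerivAt.const_mul c)).deriv
      rw [e]
      have a1 := deriv_main_ge hβ hs0 hC
      have a2 := deriv_innerTerm_ge hβ0 hs0 hC p q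
      rw [← hk, ← hD] at a2
      have a3 : 0 ≤ Real.exp (-(β / 2) * Real.cosh s) *
          (Real.cosh s * Real.sinh (β * Real.sinh s)) := by
        have := Real.sinh_nonneg_iff.2 hs0.le
        have := Real.sinh_nonneg_iff.2 (mul_nonneg hβ0.le this)
        have := Real.cosh_pos s
        positivity
      have a4 := innerErr_nonneg hβ0 p q
      have a5 := mul_le_mul_of_nonneg_left a1 (a4.trans hc)
      have a6 := mul_le_mul_of_nonneg_right hc a3
      linarith
  have h := hmono ⟨le_rfl, h₁₂⟩ ⟨h₁₂, le_rfl⟩ h₁₂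
  simp only at h
  linarith

lemma innerTerm_one_lt {β s₁ s₂ : ℝ} (hβ : 6.28 ≤ β) (h₁ : 0 < s₁) (h₁₂ : s₁ < s₂)
    (h₂ : s₂ ≤ Real.log (Real.sqrt 3)) : innerTerm β 1 1 s₁ < innerTerm β 1 1 s₂ := by
  have hβ0 : 0 < β := by linarith
  have hmono : StrictMonoOn (innerTerm β 1 1) (Set.Icc s₁ s₂) := by
    refine strictMonoOn_of_deriv_pos (convex_Icc _ _) ?_ ?_
    · intro s hs
      exact (hasDerivAt_innerTerm β 1 1 (h₁.trans_le hs.1)).continuousAt.continuousWithinAt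
    · intro s hs
      rw [interior_Icc] at hs
      have hs0 := h₁.trans hs.1
      refine lt_of_lt_of_le ?_ (deriv_main_ge hβ hs0 (two_mul_sinh_le (hs.2.le.trans h₂)))
      have := Real.sinh_pos_iff.2 hs0
      have := Real.sinh_pos_iff.2 (mul_pos hβ0 this)
      have := Real.cosh_pos s
      positivity
  exact hmono ⟨le_rfl, h₁₂.le⟩ ⟨h₁₂.le, le_rfl⟩ h₁₂

/-- The index pairs with `|a| = |b| = 1`. -/
def diagPts : Finset (ℤ × ℤ) := {(1, 1), (1, -1), (-1, 1), (-1, -1)}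

/-- The index pairs with `{|a|, |b|} = {1, 2}`. -/
def knightPts : Finset (ℤ × ℤ) :=
  {(1, 2), (1, -2), (-1, 2), (-1, -2), (2, 1), (2, -1), (-2, 1), (-2, -1)}

/-- The index pairs with `|a| = |b| = 2`. -/
def twoPts : Finset (ℤ × ℤ) := {(2, 2), (2, -2), (-2, 2), (-2, -2)}

/-- Lower bound for the growth of the term with index `p` of the symmetrized series, in units of
the growth of the leading term. -/
noncomputable def innerBound (p : ℤ × ℤ) : ℝ :=
  (if p ∈ diagPts then 1 else 0) + (if p ∈ knightPts then -0.22 else 0) +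
    (if p ∈ twoPts then -0.07 else 0) + latWeight p * (-0.1)

lemma hasSum_innerBound : HasSum innerBound 1.06 := by
  have h := (((hasSum_finset_indicator diagPts 1).add
    (hasSum_finset_indicator knightPts (-0.22))).add
    (hasSum_finset_indicator twoPts (-0.07))).add (hasSum_latWeight.mul_right (-0.1))
  have e : ((diagPts.card : ℝ) * 1 + (knightPts.card : ℝ) * (-0.22) +
      (twoPts.card : ℝ) * (-0.07) + 9 * (-0.1)) = 1.06 := by
    rw [show diagPts.card = 4 by decide, show knightPts.card = 8 by decide,
      show twoPts.card = 4 by decide]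
    norm_num
  rw [e] at h
  exact h

lemma innerTerm_natAbs (β s : ℝ) (p : ℤ × ℤ) :
    innerTerm β (((p.1 : ℝ) ^ 2 + (p.2 : ℝ) ^ 2) / 2) (p.1 * p.2) s =
      innerTerm β (((p.1.natAbs : ℝ) ^ 2 + (p.2.natAbs : ℝ) ^ 2) / 2)
        ((p.1.natAbs : ℝ) * p.2.natAbs) s := by
  rw [← innerTerm_abs β _ ((p.1 : ℝ) * p.2), abs_mul]
  simp only [Nat.cast_natAbs, Int.cast_abs, sq_abs]

lemma innerBound_le {β s₁ s₂ : ℝ} (hβ : 6.28 ≤ β) (h₁ : 0 < s₁) (h₁₂ : s₁ < s₂)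
    (h₂ : s₂ ≤ Real.log (Real.sqrt 3)) (p : ℤ × ℤ) :
    innerBound p * (innerTerm β 1 1 s₂ - innerTerm β 1 1 s₁) ≤
      innerTerm β (((p.1 : ℝ) ^ 2 + (p.2 : ℝ) ^ 2) / 2) (p.1 * p.2) s₂ -
        innerTerm β (((p.1 : ℝ) ^ 2 + (p.2 : ℝ) ^ 2) / 2) (p.1 * p.2) s₁ := by
  have hβ0 : 0 < β := by linarith
  have hΔ := sub_pos.2 (innerTerm_one_lt hβ h₁ h₁₂ h₂)
  have hw := latWeight_pos p
  rw [innerTerm_natAbs, innerTerm_natAbs]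
  suffices H : innerBound p ≤ 1 ∧ p.1.natAbs = 1 ∧ p.2.natAbs = 1 ∨
      innerErr β p.1.natAbs p.2.natAbs ≤ -innerBound p by
    rcases H with ⟨h3, h4, h5⟩ | h3
    · rw [h4, h5]
      have := mul_le_mul_of_nonneg_right h3 hΔ.le
      norm_num at this ⊢
      linarith
    · have := innerTerm_increment hβ h₁ h₁₂.le h₂ p.1.natAbs p.2.natAbs h3
      rwa [neg_neg] at this
  have hwe : latWeight p = (1 / 2) ^ p.1.natAbs * (1 / 2) ^ p.2.natAbs := rfl
  obtain ⟨a, b⟩ := p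
  simp only at hwe ⊢
  have m1 : (a, b) ∈ diagPts ↔ a.natAbs = 1 ∧ b.natAbs = 1 := by
    simp only [diagPts, Finset.mem_insert, Finset.mem_singleton, Prod.mk.injEq]
    omega
  have m2 : (a, b) ∈ knightPts ↔
      (a.natAbs = 1 ∧ b.natAbs = 2) ∨ (a.natAbs = 2 ∧ b.natAbs = 1) := by
    simp only [knightPts, Finset.mem_insert, Finset.mem_singleton, Prod.mk.injEq]
    omega
  have m3 : (a, b) ∈ twoPts ↔ a.natAbs = 2 ∧ b.natAbs = 2 := by
    simp only [twoPts, Finset.mem_insert, Finset.mem_singleton, Prod.mk.injEq]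
    omega
  unfold innerBound
  simp only [m1, m2, m3]
  rw [hwe] at hw ⊢
  generalize a.natAbs = P at hw ⊢
  generalize b.natAbs = Q at hw ⊢
  by_cases c1 : P = 1 ∧ Q = 1
  · left
    obtain ⟨rfl, rfl⟩ := c1
    norm_num
  right
  by_cases c2 : P = 1 ∧ Q = 2
  · obtain ⟨rfl, rfl⟩ := c2
    have := innerErr_one_two hβ
    norm_num at this ⊢
    linarith
  by_cases c3 : P = 2 ∧ Q = 1
  · obtain ⟨rfl, rfl⟩ := c3
    have := innerErr_one_two hβ
    rw [innerErr_comm] at this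
    norm_num at this ⊢
    linarith
  by_cases c4 : P = 2 ∧ Q = 2
  · obtain ⟨rfl, rfl⟩ := c4
    have := innerErr_two_two hβ
    norm_num at this ⊢
    linarith
  rw [if_neg c1, if_neg (by tauto), if_neg c4]
  by_cases c5 : P = 0 ∨ Q = 0
  · have : innerErr β P Q = 0 := by
      unfold innerErr
      rcases c5 with rfl | rfl <;> simp
    rw [this]
    linarith
  · have := innerErr_far hβ (p := P) (q := Q) (by omega) (by omega) (by omega) c4
    linarith

/-! ### The sign of the derivative and the curvature at the square point -/

/-- The sum of the symmetrized series: `g'` without the factor vanishing at the square point. -/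
noncomputable def innerSum (α s : ℝ) : ℝ :=
  Real.exp s * energyDer α (Real.exp s) / (Real.pi * α) / Real.sinh s *
    Real.exp (Real.pi * α * Real.cosh s / 2)

lemma innerSum_lt {α s₁ s₂ : ℝ} (hα : 2 ≤ α) (h₁ : 0 < s₁) (h₁₂ : s₁ < s₂)
    (h₂ : s₂ ≤ Real.log (Real.sqrt 3)) : innerSum α s₁ < innerSum α s₂ := by
  have hα0 : 0 < α := by linarith
  have hβ := six_le_pi_mul hα
  exact lt_of_hasSum_of_increments (hasSum_innerTerm hα0 h₁) (hasSum_innerTerm hα0 (h₁.trans h₁₂))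
    hasSum_innerBound (by norm_num) (sub_pos.2 (innerTerm_one_lt hβ h₁ h₁₂ h₂))
    (innerBound_le hβ h₁ h₁₂ h₂)

lemma innerSum_neg {α s : ℝ} (hα : 2 ≤ α) (hs : 0 < s) (hs' : s < Real.log (Real.sqrt 3)) :
    innerSum α s < 0 := by
  have h := innerSum_lt hα hs hs' le_rfl
  have h0 : innerSum α (Real.log (Real.sqrt 3)) = 0 := by
    unfold innerSum
    rw [Real.exp_log (by positivity), energyDer_sqrt_three (by linarith)]
    simp
  rwa [h0] at h

lemma energyDer_eq_innerSum {α s : ℝ} (hα : 0 < α) (hs : 0 < s) :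
    energyDer α (Real.exp s) =
      innerSum α s * (Real.pi * α * Real.sinh s * Real.exp (-(Real.pi * α * Real.cosh s / 2)) /
        Real.exp s) := by
  have hu := (Real.sinh_pos_iff.2 hs).ne'
  have hπ := Real.pi_pos.ne'
  unfold innerSum
  rw [Real.exp_neg]
  field_simp

lemma energyDer_neg {α y : ℝ} (hα : 2 ≤ α) (hy : 1 < y) (hy' : y < Real.sqrt 3) :
    energyDer α y < 0 := by
  have hα0 : 0 < α := by linarith
  have hy0 : 0 < y := by linarith
  have hs := Real.log_pos hy
  have h := innerSum_neg hα hs (Real.log_lt_log hy0 hy')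
  rw [← Real.exp_log hy0, energyDer_eq_innerSum hα0 hs]
  have hu := Real.sinh_pos_iff.2 hs
  have := Real.pi_pos
  exact mul_neg_of_neg_of_pos h (by positivity)

lemma energyDer_one (α : ℝ) : energyDer α 1 = 0 := by
  simp [energyDer]
  ring

lemma one_lt_sqrt_three : 1 < Real.sqrt 3 := by
  rw [Real.lt_sqrt (by norm_num)]
  norm_num

/-- The difference quotient of `g'` at `1` stays below a negative constant, because the symmetrized
series is increasing and negative. -/
lemma deriv_energyDer_one_neg {α : ℝ} (hα : 2 ≤ α) : deriv (energyDer α) 1 < 0 := by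
  have hα0 : 0 < α := by linarith
  have hβ0 : 0 < Real.pi * α := by have := Real.pi_pos; positivity
  have h3 := one_lt_sqrt_three
  set β := Real.pi * α with hβ
  have hL : 0 < Real.log (Real.sqrt 3) := Real.log_pos h3
  set L := Real.log (Real.sqrt 3) with hLdef
  have hc := innerSum_neg hα (show 0 < L / 2 by positivity) (by linarith)
  set c := innerSum α (L / 2) with hcdef
  have hd : HasDerivAt (energyDer α) (deriv (energyDer α) 1) 1 :=
    (differentiableAt_energyDer hα0 one_pos).hasDerivAt
  have ht := (hasDerivAt_iff_tendsto_slope.1 hd).mono_left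
    (nhdsWithin_mono (1 : ℝ) (show Set.Ioi (1 : ℝ) ⊆ {1}ᶜ from
      fun x (hx : 1 < x) => (ne_of_gt hx : x ≠ 1)))
  -- the upper bound for the difference quotient, written as a continuous function of `y`
  have hF : Filter.Tendsto (fun y : ℝ => c * (β * ((y + 1) / (2 * y)) *
      Real.exp (-(β * ((y + y⁻¹) / 2) / 2)) / y)) (nhdsWithin 1 (Set.Ioi 1))
      (nhds (c * (β * ((1 + 1) / (2 * 1)) *
        Real.exp (-(β * ((1 + 1⁻¹) / 2) / 2)) / 1))) := by
    have hcont : ContinuousAt (fun y : ℝ => c * (β * ((y + 1) / (2 * y)) *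
      Real.exp (-(β * ((y + y⁻¹) / 2) / 2)) / y)) 1 := by
      fun_prop (disch := norm_num)
    exact hcont.tendsto.mono_left nhdsWithin_le_nhds
  have hle : ∀ᶠ y in nhdsWithin (1 : ℝ) (Set.Ioi 1), slope (energyDer α) 1 y ≤
      c * (β * ((y + 1) / (2 * y)) * Real.exp (-(β * ((y + y⁻¹) / 2) / 2)) / y) := by
    have hexp : 1 < Real.exp (L / 2) := Real.one_lt_exp_iff.2 (by positivity)
    filter_upwards [Ioo_mem_nhdsGT hexp] with y hy
    have hy0 : 0 < y := by linarith [hy.1]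
    have hs := Real.log_pos hy.1
    have hsL : Real.log y < L / 2 := (Real.log_lt_iff_lt_exp hy0).2 hy.2
    have hG := innerSum_lt hα hs hsL (by linarith)
    have hcosh : Real.cosh (Real.log y) = (y + y⁻¹) / 2 := by
      rw [Real.cosh_eq, Real.exp_neg, Real.exp_log hy0]
    have hsinh : Real.sinh (Real.log y) = (y - 1) * ((y + 1) / (2 * y)) := by
      rw [Real.sinh_eq, Real.exp_neg, Real.exp_log hy0]
      field_simp
      ring
    have he := energyDer_eq_innerSum hα0 hs
    rw [Real.exp_log hy0, hcosh, hsinh, ← hβ] at he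
    have hy1 : 0 < y - 1 := by linarith [hy.1]
    rw [slope_def_field, energyDer_one, sub_zero, he]
    have e : innerSum α (Real.log y) * (β * ((y - 1) * ((y + 1) / (2 * y))) *
        Real.exp (-(β * ((y + y⁻¹) / 2) / 2)) / y) / (y - 1) =
        innerSum α (Real.log y) * (β * ((y + 1) / (2 * y)) *
          Real.exp (-(β * ((y + y⁻¹) / 2) / 2)) / y) := by
      field_simp
    rw [e]
    exact mul_le_mul_of_nonneg_right hG.le (by positivity)
  refine lt_of_le_of_lt (le_of_tendsto_of_tendsto ht hF hle) ?_
  exact mul_neg_of_neg_of_pos hc (by positivity)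

/-- The four claims about a function, bundled so that they can be carried across the duality. -/
def HexProfile (g : ℝ → ℝ) : Prop :=
  StrictAntiOn g (Set.Ioo 1 (Real.sqrt 3)) ∧
    StrictMonoOn g (Set.Ioi (Real.sqrt 3)) ∧
    deriv (deriv g) 1 < 0 ∧
    ∀ y ∈ Set.Ici (1 : ℝ), y ≠ Real.sqrt 3 → g (Real.sqrt 3) < g y

lemma hexProfile_energy_of_two_le {α : ℝ} (hα : 2 ≤ α) : HexProfile (energy α) := by
  have hα0 : 0 < α := by linarith
  have h3 := one_lt_sqrt_three
  have hd : ∀ y : ℝ, 0 < y → HasDerivAt (energy α) (energyDer α y) y :=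
    fun y hy => hasDerivAt_energy hα0 hy
  have hanti : StrictAntiOn (energy α) (Set.Icc 1 (Real.sqrt 3)) := by
    refine strictAntiOn_of_deriv_neg (convex_Icc _ _) ?_ ?_
    · intro y hy
      exact (hd y (one_pos.trans_le hy.1)).continuousAt.continuousWithinAt
    · intro y hy
      rw [interior_Icc] at hy
      rw [(hd y (one_pos.trans hy.1)).deriv]
      exact energyDer_neg hα hy.1 hy.2
  have hmono : StrictMonoOn (energy α) (Set.Ici (Real.sqrt 3)) := by
    refine strictMonoOn_of_deriv_pos (convex_Ici _) ?_ ?_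
    · intro y hy
      exact (hd y ((one_pos.trans h3).trans_le hy)).continuousAt.continuousWithinAt
    · intro y hy
      rw [interior_Ici] at hy
      rw [(hd y ((one_pos.trans h3).trans hy)).deriv]
      exact energyDer_pos hα hy
  refine ⟨hanti.mono Set.Ioo_subset_Icc_self, hmono.mono Set.Ioi_subset_Ici_self, ?_, ?_⟩
  · have he : deriv (energy α) =ᶠ[nhds 1] energyDer α := by
      filter_upwards [lt_mem_nhds (one_pos : (0 : ℝ) < 1)] with y hy
      exact (hd y hy).deriv
    rw [he.deriv_eq]
    exact deriv_energyDer_one_neg hα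
  · intro y hy hne
    rcases lt_or_gt_of_ne hne with h | h
    · exact hanti ⟨hy, h.le⟩ ⟨h3.le, le_rfl⟩ h
    · exact hmono (Set.mem_Ici.2 le_rfl) (Set.mem_Ici.2 h.le) h

lemma HexProfile.of_eq_mul {f g : ℝ → ℝ} {c : ℝ} (hg : HexProfile g) (hc : 0 < c)
    (h : ∀ y, 0 < y → f y = c * g y) : HexProfile f := by
  have h3 := one_lt_sqrt_three
  obtain ⟨h1, h2, h4, h5⟩ := hg
  refine ⟨?_, ?_, ?_, ?_⟩
  · intro x hx y hy hxy
    rw [h x (by linarith [hx.1]), h y (by linarith [hy.1])]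
    exact mul_lt_mul_of_pos_left (h1 hx hy hxy) hc
  · intro x hx y hy hxy
    have hx' : Real.sqrt 3 < x := hx
    rw [h x (by linarith), h y (by linarith)]
    exact mul_lt_mul_of_pos_left (h2 hx hy hxy) hc
  · have e1 : f =ᶠ[nhds 1] fun y => c * g y := by
      filter_upwards [lt_mem_nhds (one_pos : (0 : ℝ) < 1)] with y hy
      exact h y hy
    have e2 : deriv f =ᶠ[nhds 1] fun y => c * deriv g y := by
      refine e1.deriv.trans (Filter.Eventually.of_forall fun y => ?_)
      simp only [deriv_const_mul_field]
    rw [e2.deriv_eq, deriv_const_mul_field]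
    exact mul_neg_of_pos_of_neg hc h4
  · intro y hy hne
    have hy' : (1 : ℝ) ≤ y := hy
    rw [h y (by linarith), h _ (by linarith)]
    exact mul_lt_mul_of_pos_left (h5 y hy hne) hc

lemma hexProfile_energy {α : ℝ} (hα : 0 < α) : HexProfile (energy α) := by
  rcases le_total 2 α with h | h
  · exact hexProfile_energy_of_two_le h
  · have h4 : 2 ≤ 4 / α := by
      rw [le_div_iff₀ hα]
      linarith
    exact (hexProfile_energy_of_two_le h4).of_eq_mul (by positivity : 0 < 2 / α)
      (fun y hy => energy_dual hα hy)

/-- `g_α(y) = θ₃(αy)θ₃(α/y) + θ₂(αy)θ₂(α/y)` is strictly decreasing on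
`(1,√3)`, strictly increasing on `(√3,∞)`, has `g_α''(1) < 0`, and `y = √3` is the unique
minimizer on `[1,∞)`. -/
theorem g_alpha_properties (α : ℝ) (hα : 0 < α) (g : ℝ → ℝ)
    (hg : ∀ y : ℝ, g y = theta3 (α * y) * theta3 (α / y) + theta2 (α * y) * theta2 (α / y)) :
    StrictAntiOn g (Set.Ioo 1 (Real.sqrt 3)) ∧
    StrictMonoOn g (Set.Ioi (Real.sqrt 3)) ∧
    deriv (deriv g) 1 < 0 ∧
    ∀ y ∈ Set.Ici (1 : ℝ), y ≠ Real.sqrt 3 → g (Real.sqrt 3) < g y := by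
  have he : g = energy α := funext hg
  rw [he]
  exact hexProfile_energy hα
end

section
/- For t > 0, α > 0 and y ≥ 1 define E_t(y;α) = θ₃(t²α)·θ₃(yα)·θ₃(α/y) + θ₂(t²α)·θ₂(yα)·θ₂(α/y). Then for every α > 0 there exists t₀(α) > 0 such that for every t with 0 < t < t₀(α), y = 1 is not a minimizer of y ↦ E_t(y;α) on [1,+∞); that is, there exists y > 1 with E_t(y;α) < E_t(1;α). -/
/-!
As `t → 0`, both `θ₃(t²α)` and `θ₂(t²α)` are asymptotic to `1 / (t√α)` (Poisson summation), so
`t√α · E_t(y;α)` converges to the planar energy `F(y;α) = θ₃(yα)θ₃(α/y) + θ₂(yα)θ₂(α/y)`, the theta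
function of the centred rectangular lattice with aspect ratio `y`. It therefore suffices to find,
for each `α`, one `y > 1` with `F(y;α) < F(1;α)`; the value `y = 5/3`, close to the hexagonal
`√3`, works for all `α` (`planar_lt`).

The centred rectangular lattice is similar to its dual, which gives the functional equation
`F(y;α) = (2/α) F(y;4/α)` (`planar_dual`) and reduces the claim to `α ≥ 2`. In that range geometric
series bounds suffice: with `u = e^{-πα/30} < 0.8188`, one has `F(1;α) ≥ 1 + 4u¹⁵`, while
`F(5/3;α) ≤ ((1+u¹⁸)(1+u⁵⁰) + 4u¹⁷) / ((1-u¹⁸)(1-u⁵⁰))`, leaving a polynomial inequality in `u`.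
-/

open scoped BigOperators

/-- The theta function `E_t(y;α) = θ_{L_{y,t}}(α)` of the body-centred-orthorhombic
lattice `L_{y,t}`. -/
noncomputable def Et (t α y : ℝ) : ℝ :=
  theta3 (t ^ 2 * α) * theta3 (y * α) * theta3 (α / y)
    + theta2 (t ^ 2 * α) * theta2 (y * α) * theta2 (α / y)

open Filter Topology

/-! ### One-dimensional theta functions -/

/-- A series over `ℤ` dominated by geometric series on both half-lines. -/
lemma summable_and_tsum_le_of_geometric {f : ℤ → ℝ} {q C D : ℝ} (hq0 : 0 ≤ q) (hq1 : q < 1)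
    (hf : ∀ n, 0 ≤ f n) (hC : ∀ n : ℕ, f n ≤ C * q ^ n)
    (hD : ∀ n : ℕ, f (-((n : ℤ) + 1)) ≤ D * q ^ n) :
    Summable f ∧ ∑' n, f n ≤ (C + D) / (1 - q) := by
  have hg := hasSum_geometric_of_lt_one hq0 hq1
  have s1 : Summable fun n : ℕ => f n :=
    Summable.of_nonneg_of_le (fun n => hf n) hC (hg.mul_left C).summable
  have s2 : Summable fun n : ℕ => f (-((n : ℤ) + 1)) :=
    Summable.of_nonneg_of_le (fun n => hf _) hD (hg.mul_left D).summable
  have h := HasSum.of_nat_of_neg_add_one s1.hasSum s2.hasSum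
  refine ⟨h.summable, ?_⟩
  rw [h.tsum_eq, add_div, div_eq_mul_inv, div_eq_mul_inv]
  exact add_le_add (hasSum_le hC s1.hasSum (hg.mul_left C))
    (hasSum_le hD s2.hasSum (hg.mul_left D))

lemma exp_neg_pi_mul_lt_one {x : ℝ} (hx : 0 < x) : Real.exp (-Real.pi * x) < 1 := by
  rw [Real.exp_lt_one_iff]
  have := mul_pos Real.pi_pos hx
  linarith

lemma theta3_aux {x : ℝ} (hx : 0 < x) :
    Summable (fun n : ℤ => Real.exp (-Real.pi * (n : ℝ) ^ 2 * x)) ∧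
      theta3 x ≤ (1 + Real.exp (-Real.pi * x)) / (1 - Real.exp (-Real.pi * x)) := by
  have hp := mul_pos Real.pi_pos hx
  refine summable_and_tsum_le_of_geometric (Real.exp_pos _).le (exp_neg_pi_mul_lt_one hx)
    (fun n => (Real.exp_pos _).le) (fun n => ?_) (fun n => ?_)
  · rw [← Real.exp_nat_mul, one_mul, Real.exp_le_exp]
    have h : (n : ℝ) ≤ (n : ℝ) ^ 2 := by exact_mod_cast Nat.le_self_pow two_ne_zero n
    push_cast
    nlinarith
  · rw [← Real.exp_nat_mul, ← Real.exp_add, Real.exp_le_exp]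
    have h : (n : ℝ) ≤ (n : ℝ) ^ 2 := by exact_mod_cast Nat.le_self_pow two_ne_zero n
    have h0 : (0 : ℝ) ≤ n := n.cast_nonneg
    push_cast
    nlinarith

lemma theta2_aux {x : ℝ} (hx : 0 < x) :
    Summable (fun n : ℤ => Real.exp (-Real.pi * ((n : ℝ) + 1 / 2) ^ 2 * x)) ∧
      theta2 x ≤ (Real.exp (-Real.pi * (x / 4)) + Real.exp (-Real.pi * (x / 4))) /
        (1 - Real.exp (-Real.pi * x)) := by
  have hp := mul_pos Real.pi_pos hx
  refine summable_and_tsum_le_of_geometric (Real.exp_pos _).le (exp_neg_pi_mul_lt_one hx)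
    (fun n => (Real.exp_pos _).le) (fun n => ?_) (fun n => ?_) <;>
  · rw [← Real.exp_nat_mul, ← Real.exp_add, Real.exp_le_exp]
    have h0 : (0 : ℝ) ≤ n := n.cast_nonneg
    push_cast
    nlinarith [mul_nonneg hp.le (sq_nonneg (n : ℝ))]

lemma one_le_theta3 {x : ℝ} (hx : 0 < x) : 1 ≤ theta3 x := by
  have h := (theta3_aux hx).1.le_tsum (0 : ℤ) (fun n _ => (Real.exp_pos _).le)
  simpa [theta3] using h

lemma le_theta2 {x : ℝ} (hx : 0 < x) : 2 * Real.exp (-Real.pi * (x / 4)) ≤ theta2 x := by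
  have h := (theta2_aux hx).1.sum_le_tsum ({0, -1} : Finset ℤ) (fun n _ => (Real.exp_pos _).le)
  rw [Finset.sum_pair (by norm_num)] at h
  refine le_trans (le_of_eq ?_) h
  rw [two_mul]
  congr 2 <;> push_cast <;> ring

/-- Splitting the lattice `ℤ/2` into integers and half-integers. -/
lemma theta3_div_four {x : ℝ} (hx : 0 < x) : theta3 (x / 4) = theta3 x + theta2 x := by
  obtain ⟨f, hf⟩ : ∃ f : ℤ → ℝ, f = fun n : ℤ => Real.exp (-Real.pi * (n : ℝ) ^ 2 * (x / 4)) :=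
    ⟨_, rfl⟩
  have h3 : HasSum (fun k : ℤ => f (2 * k)) (theta3 x) := by
    have e : (fun k : ℤ => f (2 * k)) = fun k : ℤ => Real.exp (-Real.pi * (k : ℝ) ^ 2 * x) := by
      funext k
      simp only [hf]
      congr 1
      push_cast
      ring
    rw [e]
    exact (theta3_aux hx).1.hasSum
  have h2 : HasSum (fun k : ℤ => f (2 * k + 1)) (theta2 x) := by
    have e : (fun k : ℤ => f (2 * k + 1)) =
        fun k : ℤ => Real.exp (-Real.pi * ((k : ℝ) + 1 / 2) ^ 2 * x) := by
      funext k
      simp only [hf]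
      congr 1
      push_cast
      ring
    rw [e]
    exact (theta2_aux hx).1.hasSum
  have i0 : Function.Injective fun k : ℤ => 2 * k := fun a b h => by
    have h : 2 * a = 2 * b := h
    omega
  have i1 : Function.Injective fun k : ℤ => 2 * k + 1 := fun a b h => by
    have h : 2 * a + 1 = 2 * b + 1 := h
    omega
  have hc : IsCompl (Set.range fun k : ℤ => 2 * k) (Set.range fun k : ℤ => 2 * k + 1) := by
    simpa using Int.isCompl_even_odd
  have h : HasSum f (theta3 x + theta2 x) :=
    HasSum.add_isCompl hc (i0.hasSum_range_iff.2 h3) (i1.hasSum_range_iff.2 h2)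
  rw [theta3, ← hf]
  exact h.tsum_eq

lemma sqrt_mul_theta3 {x : ℝ} (hx : 0 < x) : √x * theta3 x = theta3 (1 / x) := by
  have h := Real.tsum_exp_neg_mul_int_sq hx
  rw [← Real.sqrt_eq_rpow] at h
  have e1 : theta3 x = ∑' n : ℤ, Real.exp (-Real.pi * x * (n : ℝ) ^ 2) :=
    tsum_congr fun n => by congr 1; ring
  have e2 : theta3 (1 / x) = ∑' n : ℤ, Real.exp (-Real.pi / x * (n : ℝ) ^ 2) :=
    tsum_congr fun n => by congr 1; ring
  have := Real.sqrt_pos.2 hx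
  rw [e1, e2, h]
  field_simp

lemma sqrt_mul_theta2 {x : ℝ} (hx : 0 < x) :
    √x * theta2 x = 2 * theta3 (4 / x) - theta3 (1 / x) := by
  have h := sqrt_mul_theta3 (x := x / 4) (by positivity)
  have h4 : √(x / 4) = √x / 2 := by
    rw [Real.sqrt_div hx.le, show (4 : ℝ) = 2 ^ 2 by norm_num, Real.sqrt_sq (by norm_num)]
  rw [h4, theta3_div_four hx, show 1 / (x / 4) = 4 / x by field_simp] at h
  have h1 := sqrt_mul_theta3 hx
  linarith

lemma tendsto_theta3_atTop : Tendsto theta3 atTop (𝓝 1) := by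
  have he : Tendsto (fun x : ℝ => Real.exp (-Real.pi * x)) atTop (𝓝 0) :=
    Real.tendsto_exp_atBot.comp
      (tendsto_id.const_mul_atTop_of_neg (neg_lt_zero.2 Real.pi_pos))
  have hu : Tendsto (fun x : ℝ => (1 + Real.exp (-Real.pi * x)) / (1 - Real.exp (-Real.pi * x)))
      atTop (𝓝 1) := by
    have := (he.const_add 1).div (he.const_sub 1) (by norm_num)
    simpa only [add_zero, sub_zero, div_one, Pi.div_def] using this
  refine tendsto_of_tendsto_of_tendsto_of_le_of_le' tendsto_const_nhds hu ?_ ?_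
  · filter_upwards [eventually_gt_atTop 0] with x hx using one_le_theta3 hx
  · filter_upwards [eventually_gt_atTop 0] with x hx using (theta3_aux hx).2

/-! ### The planar energy -/

/-- The theta function at `α` of the centred rectangular lattice with sides `√y` and `1/√y`:
the limit of `t√α · E_t(y;α)` as `t → 0`. -/
noncomputable def planarEnergy (α y : ℝ) : ℝ :=
  theta3 (y * α) * theta3 (α / y) + theta2 (y * α) * theta2 (α / y)

/-- The functional equation coming from Poisson summation on the centred rectangular lattice. -/
lemma planar_dual {α y : ℝ} (hα : 0 < α) (hy : 0 < y) :
    α * planarEnergy α y = 2 * planarEnergy (4 / α) y := by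
  have ha : 0 < y * α := by positivity
  have hb : 0 < α / y := by positivity
  have hs : α = √(y * α) * √(α / y) := by
    rw [← Real.sqrt_mul ha.le, show y * α * (α / y) = α ^ 2 by field_simp, Real.sqrt_sq hα.le]
  have a3 := sqrt_mul_theta3 ha
  have a2 := sqrt_mul_theta2 ha
  have b3 := sqrt_mul_theta3 hb
  have b2 := sqrt_mul_theta2 hb
  have c1 := theta3_div_four (x := 4 / (y * α)) (by positivity)
  have c2 := theta3_div_four (x := 4 / (α / y)) (by positivity)
  rw [show 4 / (y * α) / 4 = 1 / (y * α) by field_simp] at c1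
  rw [show 4 / (α / y) / 4 = 1 / (α / y) by field_simp] at c2
  have e : α * planarEnergy α y = (√(y * α) * theta3 (y * α)) * (√(α / y) * theta3 (α / y)) +
      (√(y * α) * theta2 (y * α)) * (√(α / y) * theta2 (α / y)) := by
    rw [planarEnergy]
    nth_rewrite 1 [hs]
    ring
  rw [e, a3, a2, b3, b2, c1, c2, planarEnergy, show y * (4 / α) = 4 / (α / y) by field_simp,
    show 4 / α / y = 4 / (y * α) by field_simp]
  ring

lemma planar_polynomial_ineq {u : ℝ} (h0 : 0 < u) (h1 : u < 0.8188) :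
    (1 + u ^ 18) * (1 + u ^ 50) + 4 * u ^ 17 <
      (1 + 4 * u ^ 15) * ((1 - u ^ 18) * (1 - u ^ 50)) := by
  have b2 : u ^ 2 ≤ 0.8188 ^ 2 := by gcongr
  have b3 : u ^ 3 ≤ 0.8188 ^ 3 := by gcongr
  have b18 : u ^ 18 ≤ 0.8188 ^ 18 := by gcongr
  have b35 : u ^ 35 ≤ 0.8188 ^ 35 := by gcongr
  have b50 : u ^ 50 ≤ 0.8188 ^ 50 := by gcongr
  have key : 0 < 4 - 4 * u ^ 2 - 2 * u ^ 3 - 2 * u ^ 35 - 4 * u ^ 18 - 4 * u ^ 50 := by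
    norm_num at b2 b3 b18 b35 b50
    linarith
  have h68 : 0 < u ^ 68 := by positivity
  have : 0 < u ^ 15 *
      (4 - 4 * u ^ 2 - 2 * u ^ 3 - 2 * u ^ 35 - 4 * u ^ 18 - 4 * u ^ 50 + 4 * u ^ 68) :=
    mul_pos (by positivity) (by linarith)
  nlinarith

lemma planar_lt_of_two_le {α : ℝ} (hα : 2 ≤ α) : planarEnergy α (5 / 3) < planarEnergy α 1 := by
  have hα0 : 0 < α := by linarith
  obtain ⟨u, hu⟩ : ∃ u, u = Real.exp (-Real.pi * (α / 30)) := ⟨_, rfl⟩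
  have hu0 : 0 < u := hu ▸ Real.exp_pos _
  have hu1 : u < 0.8188 := by
    have : u ≤ Real.exp (-(1 / 5)) := by
      rw [hu, Real.exp_le_exp]
      nlinarith [Real.pi_gt_three]
    have h5 : Real.exp (-(1 / 5)) < 0.8188 := by
      rw [Real.exp_neg, inv_lt_comm₀ (Real.exp_pos _) (by norm_num)]
      have := Real.sum_le_exp_of_nonneg (x := 1 / 5) (by norm_num) 4
      norm_num [Finset.sum_range_succ, Nat.factorial] at this ⊢
      linarith
    linarith
  have hpow : ∀ (k : ℕ) (z : ℝ), z = k * (α / 30) → Real.exp (-Real.pi * z) = u ^ k := by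
    intro k z hz
    rw [hu, ← Real.exp_nat_mul, hz]
    congr 1
    ring
  have hx1 : 0 < 5 / 3 * α := by positivity
  have hx2 : 0 < α / (5 / 3) := by positivity
  have A3 := (theta3_aux hx1).2
  have B3 := (theta3_aux hx2).2
  have A2 := (theta2_aux hx1).2
  have B2 := (theta2_aux hx2).2
  have q1 := exp_neg_pi_mul_lt_one hx1
  have q2 := exp_neg_pi_mul_lt_one hx2
  have e1 := hpow 50 (5 / 3 * α) (by push_cast; ring)
  have e2 := hpow 18 (α / (5 / 3)) (by push_cast; ring)
  -- The two half-integer prefactors only have an integral exponent after multiplication.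
  have e3 : Real.exp (-Real.pi * (5 / 3 * α / 4)) * Real.exp (-Real.pi * (α / (5 / 3) / 4)) =
      u ^ 17 := by
    rw [← hpow 17 _ rfl, ← Real.exp_add]
    congr 1
    push_cast
    ring
  have e4 : Real.exp (-Real.pi * (α / 4)) * Real.exp (-Real.pi * (α / 4)) = u ^ 15 := by
    rw [← hpow 15 _ rfl, ← Real.exp_add]
    congr 1
    push_cast
    ring
  rw [e1] at A3 A2 q1
  rw [e2] at B3 B2 q2
  have d1 : 0 < 1 - u ^ 50 := by linarith
  have d2 : 0 < 1 - u ^ 18 := by linarith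
  have t3 := one_le_theta3 hα0
  have t2 := le_theta2 hα0
  have lower : 1 + 4 * u ^ 15 ≤ planarEnergy α 1 := by
    rw [planarEnergy, one_mul, div_one, ← e4]
    have := mul_le_mul t2 t2 (by positivity) (le_trans (by positivity) t2)
    nlinarith
  have upper : planarEnergy α (5 / 3) ≤
      ((1 + u ^ 18) * (1 + u ^ 50) + 4 * u ^ 17) / ((1 - u ^ 18) * (1 - u ^ 50)) := by
    have m3 := mul_le_mul A3 B3 (zero_le_one.trans (one_le_theta3 hx2)) (by positivity)
    have m2 := mul_le_mul A2 B2 (le_trans (by positivity) (le_theta2 hx2)) (by positivity)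
    refine (add_le_add m3 m2).trans (le_of_eq ?_)
    rw [← e3]
    field_simp
    ring
  refine (upper.trans_lt ?_).trans_le lower
  rw [div_lt_iff₀ (by positivity)]
  exact planar_polynomial_ineq hu0 hu1

lemma planar_lt {α : ℝ} (hα : 0 < α) : planarEnergy α (5 / 3) < planarEnergy α 1 := by
  rcases le_total 2 α with h | h
  · exact planar_lt_of_two_le h
  · have h4 : 2 ≤ 4 / α := by
      rw [le_div_iff₀ hα]
      linarith
    have h1 := planar_dual hα (y := 1) one_pos
    have h2 := planar_dual hα (y := 5 / 3) (by norm_num)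
    have := planar_lt_of_two_le h4
    exact lt_of_mul_lt_mul_left (by linarith) hα.le

/-! ### The limit `t → 0` -/

lemma tendsto_sqrt_mul_Et {α y : ℝ} (hα : 0 < α) :
    Tendsto (fun t : ℝ => √(t ^ 2 * α) * Et t α y) (𝓝[>] 0) (𝓝 (planarEnergy α y)) := by
  have hs : Tendsto (fun t : ℝ => t ^ 2 * α) (𝓝[>] 0) (𝓝[>] 0) := by
    refine tendsto_nhdsWithin_iff.2 ⟨?_, ?_⟩
    · have : Tendsto (fun t : ℝ => t ^ 2 * α) (𝓝 0) (𝓝 (0 ^ 2 * α)) :=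
        Continuous.tendsto (by fun_prop) 0
      simpa using this.mono_left nhdsWithin_le_nhds
    · filter_upwards [self_mem_nhdsWithin] with t ht
      have ht : 0 < t := ht
      exact Set.mem_Ioi.2 (by positivity)
  have hlim : ∀ c : ℝ, 0 < c →
      Tendsto (fun t : ℝ => theta3 (c / (t ^ 2 * α))) (𝓝[>] 0) (𝓝 1) := by
    intro c hc
    refine tendsto_theta3_atTop.comp ?_
    simpa only [div_eq_mul_inv, Function.comp_def] using
      (tendsto_inv_nhdsGT_zero.comp hs).const_mul_atTop hc
  have h1 := hlim 1 one_pos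
  have h4 := hlim 4 (by norm_num)
  have hG := (h1.mul_const (theta3 (y * α) * theta3 (α / y))).add
    (((h4.const_mul 2).sub h1).mul_const (theta2 (y * α) * theta2 (α / y)))
  rw [show 1 * (theta3 (y * α) * theta3 (α / y)) +
    (2 * 1 - 1) * (theta2 (y * α) * theta2 (α / y)) = planarEnergy α y by
      rw [planarEnergy]; ring] at hG
  refine hG.congr' ?_
  filter_upwards [self_mem_nhdsWithin] with t ht
  have ht : 0 < t := ht
  have hx : 0 < t ^ 2 * α := by positivity
  rw [← sqrt_mul_theta2 hx, ← sqrt_mul_theta3 hx, Et]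
  ring

/-- for every `α > 0` there is `t₀(α) > 0` such that for all `0 < t < t₀(α)`,
`y = 1` is not a minimizer of `y ↦ E_t(y;α)` on `[1,∞)`: some `y > 1` has strictly smaller
energy. -/
theorem one_not_minimizer_for_small_t (α : ℝ) (hα : 0 < α) :
    ∃ t₀ : ℝ, 0 < t₀ ∧ ∀ t : ℝ, 0 < t → t < t₀ →
      ∃ y : ℝ, 1 < y ∧ Et t α y < Et t α 1 := by
  have h := (tendsto_sqrt_mul_Et hα).eventually_lt (tendsto_sqrt_mul_Et hα) (planar_lt hα)
  obtain ⟨t₀, ht₀, hsub⟩ := mem_nhdsGT_iff_exists_Ioo_subset.1 h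
  refine ⟨t₀, ht₀, fun t h0 h1 => ⟨5 / 3, by norm_num, ?_⟩⟩
  exact lt_of_mul_lt_mul_left (hsub ⟨h0, h1⟩) (Real.sqrt_nonneg _)
end
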